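/- arXiv:2506.12463 — 10 statements merged into one kernel-verified Lean document; each statement's English description precedes it below -/
import Mathlib

section
/- Let n ≥ 1, let W be an n×n real row-stochastic matrix, and let Θ = diag(θ) with θ_i ∈ [0,1] for all i. Assume that for every agent i, either θ_i > 0 or there exist k ≥ 1 and an agent j with θ_j > 0 such that (W^k)_{ij} > 0. Then for every initial vector x₀ ∈ ℝⁿ, the sequence defined by x(0) = x₀ and x(t+1) = (I − Θ)W x(t) + Θ x₀ converges, as t → ∞, to P x₀, where P = (I − (I − Θ)W)^{-1} Θ. -/
open Matrix Finset

theorem fj_aux_apply {n : ℕ} (W : Matrix (Fin n) (Fin n) ℝ) (θ u : Fin n → ℝ) (i : Fin n) :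
    ((1 - Matrix.diagonal θ) * W).mulVec u i = (1 - θ i) * ∑ j, W i j * u j := by
  rw [← Matrix.mulVec_mulVec, Matrix.sub_mulVec, Matrix.one_mulVec, Pi.sub_apply,
    Matrix.mulVec_diagonal]
  simp only [Matrix.mulVec, dotProduct]
  ring

theorem fj_aux_max {n : ℕ} (W : Matrix (Fin n) (Fin n) ℝ)
    (hW0 : ∀ i j, 0 ≤ W i j) (hW1 : ∀ i, ∑ j, W i j = 1)
    (θ : Fin n → ℝ) (hθ : ∀ i, θ i ∈ Set.Icc (0 : ℝ) 1)
    (hreach : ∀ i, 0 < θ i ∨ ∃ k, 1 ≤ k ∧ ∃ j, 0 < θ j ∧ 0 < (W ^ k) i j)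
    (u : Fin n → ℝ) (hu : ∀ i, u i ≤ (1 - θ i) * ∑ j, W i j * u j) (i : Fin n) : u i ≤ 0 := by
  obtain ⟨m, -, hm⟩ := Finset.exists_max_image Finset.univ u ⟨i, Finset.mem_univ i⟩
  refine (hm i (Finset.mem_univ i)).trans ?_
  by_contra! hM
  have hle : ∀ l, ∑ j, W l j * u j ≤ u m := fun l => by
    calc ∑ j, W l j * u j ≤ ∑ j, W l j * u m :=
          Finset.sum_le_sum fun j _ =>
            mul_le_mul_of_nonneg_left (hm j (Finset.mem_univ j)) (hW0 l j)
      _ = u m := by rw [← Finset.sum_mul, hW1, one_mul]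
  have key : ∀ l, u l = u m → θ l = 0 ∧ ∑ j, W l j * u j = u m := fun l hl => by
    have h1 := hu l
    have h2 := hle l
    have h3 := (hθ l).1
    have h4 := (hθ l).2
    rw [hl] at h1
    have h5 : θ l * u m ≤ 0 := by
      nlinarith [mul_le_mul_of_nonneg_left h2 (sub_nonneg.2 h4)]
    have h6 : θ l = 0 := by
      by_contra h
      have : 0 < θ l := lt_of_le_of_ne h3 (Ne.symm h)
      nlinarith [mul_pos this hM]
    refine ⟨h6, le_antisymm h2 ?_⟩
    rw [h6] at h1
    linarith
  have step : ∀ l, u l = u m → ∀ j, 0 < W l j → u j = u m := fun l hl j hj => by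
    have h1 := (key l hl).2
    have h2 : ∑ j, W l j * (u m - u j) = 0 := by
      simp only [mul_sub, Finset.sum_sub_distrib, h1]
      rw [← Finset.sum_mul, hW1]; ring
    have h3 := (Finset.sum_eq_zero_iff_of_nonneg (fun j _ =>
      mul_nonneg (hW0 l j) (sub_nonneg.2 (hm j (Finset.mem_univ j))))).1 h2 j (Finset.mem_univ j)
    rcases mul_eq_zero.1 h3 with h | h <;> linarith
  have hpow : ∀ k : ℕ, ∀ j, 0 < (W ^ k) m j → u j = u m := by
    intro k
    induction k with
    | zero =>
      intro j hj
      rw [pow_zero, Matrix.one_apply] at hj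
      split_ifs at hj with h
      · rw [h]
      · exact absurd hj (lt_irrefl _)
    | succ k ih =>
      intro j hj
      rw [pow_succ, Matrix.mul_apply] at hj
      obtain ⟨l, -, hl⟩ := Finset.exists_lt_of_sum_lt (s := Finset.univ)
        (f := fun _ : Fin n => (0 : ℝ)) (by simpa using hj)
      have h0 := hW0 l j
      have hlj : 0 < W l j := by
        rcases h0.lt_or_eq with h | h
        · exact h
        · rw [← h] at hl; simp at hl
      exact step l (ih l (pos_of_mul_pos_left hl h0)) j hlj
  rcases hreach m with h | ⟨k, -, j, hj, hk⟩
  · exact h.ne' (key m rfl).1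
  · exact hj.ne' (key j (hpow k j hk)).1

/-- FJ dynamics `x(t+1) = (I-Θ)W x(t) + Θ x₀` converges to `P x₀`
with `P = (I - (I-Θ)W)⁻¹ Θ`. -/
theorem fj_dynamics_converges
    (n : ℕ) (hn : 1 ≤ n) (W : Matrix (Fin n) (Fin n) ℝ)
    (hW0 : ∀ i j, 0 ≤ W i j) (hW1 : ∀ i, ∑ j, W i j = 1)
    (θ : Fin n → ℝ) (hθ : ∀ i, θ i ∈ Set.Icc (0 : ℝ) 1)
    (hreach : ∀ i, 0 < θ i ∨ ∃ k, 1 ≤ k ∧ ∃ j, 0 < θ j ∧ 0 < (W ^ k) i j)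
    (x₀ : Fin n → ℝ) (x : ℕ → Fin n → ℝ) (hx0 : x 0 = x₀)
    (hxrec : ∀ t, x (t + 1) =
      ((1 - Matrix.diagonal θ) * W).mulVec (x t) + (Matrix.diagonal θ).mulVec x₀) :
    Filter.Tendsto x Filter.atTop
      (nhds (((1 - (1 - Matrix.diagonal θ) * W)⁻¹ * Matrix.diagonal θ).mulVec x₀)) := by
  have hmax := fj_aux_max W hW0 hW1 θ hθ hreach
  have happ := fj_aux_apply W θ
  set A := (1 - Matrix.diagonal θ) * W with hA
  have hunit : IsUnit (1 - A) := by
    rw [← Matrix.mulVec_injective_iff_isUnit]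
    intro v w hvw
    have h : A.mulVec (v - w) = v - w := by
      have h' : (1 - A).mulVec (v - w) = 0 := by
        rw [Matrix.mulVec_sub]; exact sub_eq_zero.2 hvw
      rw [Matrix.sub_mulVec, Matrix.one_mulVec] at h'
      exact (sub_eq_zero.1 h').symm
    have h' : A.mulVec (w - v) = w - v := by
      rw [← neg_sub v w, Matrix.mulVec_neg, h]
    funext i
    have h1 := hmax (v - w) (fun i => by rw [← happ, h]) i
    have h2 := hmax (w - v) (fun i => by rw [← happ, h']) i
    simp only [Pi.sub_apply] at h1 h2
    linarith
  set p := ((1 - A)⁻¹ * Matrix.diagonal θ).mulVec x₀ with hp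
  have hpfix : p = A.mulVec p + (Matrix.diagonal θ).mulVec x₀ := by
    have h : (1 - A).mulVec p = (Matrix.diagonal θ).mulVec x₀ := by
      rw [hp, Matrix.mulVec_mulVec, ← mul_assoc,
        Matrix.mul_nonsing_inv _ ((Matrix.isUnit_iff_isUnit_det _).1 hunit), one_mul]
    rw [← h, Matrix.sub_mulVec, Matrix.one_mulVec]
    abel
  have hmono : ∀ u v : Fin n → ℝ, (∀ i, u i ≤ v i) → ∀ i, A.mulVec u i ≤ A.mulVec v i := by
    intro u v huv i
    rw [happ, happ]
    exact mul_le_mul_of_nonneg_left (Finset.sum_le_sum fun j _ =>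
      mul_le_mul_of_nonneg_left (huv j) (hW0 i j)) (sub_nonneg.2 (hθ i).2)
  obtain ⟨C, hC0, hC⟩ : ∃ C : ℝ, 0 ≤ C ∧ ∀ i, |x 0 i - p i| ≤ C :=
    ⟨∑ i, |x 0 i - p i|, Finset.sum_nonneg fun _ _ => abs_nonneg _, fun i =>
      Finset.single_le_sum (f := fun i => |x 0 i - p i|) (fun _ _ => abs_nonneg _)
        (Finset.mem_univ i)⟩
  let r : ℕ → Fin n → ℝ := fun t => (fun v => A.mulVec v)^[t] (fun _ => C)
  have hr0 : ∀ i, r 0 i = C := fun i => rfl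
  have hrs : ∀ t, r (t + 1) = A.mulVec (r t) := fun t =>
    Function.iterate_succ_apply' _ _ _
  have herr : ∀ t i, x (t + 1) i - p i = A.mulVec (x t - p) i := fun t i => by
    have h := congrFun hpfix i
    rw [hxrec, Matrix.mulVec_sub]
    simp only [Pi.add_apply, Pi.sub_apply] at h ⊢
    linarith
  have hbound : ∀ t i, |x t i - p i| ≤ r t i := by
    intro t
    induction t with
    | zero => exact hC
    | succ t ih =>
      intro i
      rw [abs_le, herr, hrs]
      constructor
      · have := hmono (-(r t)) (x t - p) (fun i => (abs_le.1 (ih i)).1) i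
        rwa [Matrix.mulVec_neg] at this
      · exact hmono _ _ (fun i => (abs_le.1 (ih i)).2) i
  have hrnn : ∀ t i, 0 ≤ r t i := fun t i => (abs_nonneg _).trans (hbound t i)
  have hdec : ∀ t i, r (t + 1) i ≤ r t i := by
    intro t
    induction t with
    | zero =>
      intro i
      rw [hrs, happ]
      simp only [hr0]
      rw [← Finset.sum_mul, hW1]
      nlinarith [(hθ i).1]
    | succ t ih =>
      intro i
      rw [hrs (t + 1)]
      conv_rhs => rw [hrs t]
      exact hmono _ _ ih i
  have hlim : ∀ i, ∃ l, Filter.Tendsto (fun t => r t i) Filter.atTop (nhds l) := fun i =>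
    ⟨_, tendsto_atTop_ciInf (antitone_nat_of_succ_le fun t => hdec t i)
      ⟨0, by rintro _ ⟨t, rfl⟩; exact hrnn t i⟩⟩
  choose l hl using hlim
  have hlfix : ∀ i, l i = (1 - θ i) * ∑ j, W i j * l j := fun i => by
    have h1 := (hl i).comp (Filter.tendsto_add_atTop_nat 1)
    have h2 : Filter.Tendsto (fun t => (1 - θ i) * ∑ j, W i j * r t j) Filter.atTop
        (nhds ((1 - θ i) * ∑ j, W i j * l j)) :=
      (tendsto_finsetSum _ fun j _ => (hl j).const_mul _).const_mul _
    refine tendsto_nhds_unique h1 (h2.congr fun t => ?_)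
    simp only [Function.comp]
    rw [hrs, happ]
  have hl0 : ∀ i, l i = 0 := fun i =>
    le_antisymm (hmax l (fun i => (hlfix i).le) i)
      (ge_of_tendsto' (hl i) fun t => hrnn t i)
  rw [tendsto_pi_nhds]
  intro i
  rw [tendsto_iff_dist_tendsto_zero]
  have := hl i
  rw [hl0] at this
  exact squeeze_zero (fun _ => dist_nonneg) (fun t => by rw [Real.dist_eq]; exact hbound t i) this
end

section
/- Assume W is strongly connected, θ_j > 0 for at least one agent j, and ω ∈ (0,1). Then for every subset S ⊆ V and every agent i ∉ S with θ_i < 1, the influencer's social power strictly increases when i is added: sp₀(S ∪ {i}) > sp₀(S). -/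
open Matrix Finset

/-- `H(S) = (I - ω Σ_{j∈S} e_j e_jᵀ) (I - Θ) W`. -/
noncomputable def Hmat {n : ℕ} (W : Matrix (Fin n) (Fin n) ℝ) (θ : Fin n → ℝ) (ω : ℝ)
    (S : Finset (Fin n)) : Matrix (Fin n) (Fin n) ℝ :=
  (1 - Matrix.diagonal (fun i => if i ∈ S then ω else 0)) *
    ((1 - Matrix.diagonal θ) * W)

/-- `p₀(S) = (I - H(S))⁻¹ (I - Θ) ω Σ_{j∈S} e_j`. -/
noncomputable def p0vec {n : ℕ} (W : Matrix (Fin n) (Fin n) ℝ) (θ : Fin n → ℝ) (ω : ℝ)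
    (S : Finset (Fin n)) : Fin n → ℝ :=
  ((1 - Hmat W θ ω S)⁻¹ * (1 - Matrix.diagonal θ)).mulVec
    (fun j => if j ∈ S then ω else 0)

/-- The influencer's social power `sp₀(S) = (𝟙ᵀ p₀(S) + 1)/(n+1)`. -/
noncomputable def sp0 {n : ℕ} (W : Matrix (Fin n) (Fin n) ℝ) (θ : Fin n → ℝ) (ω : ℝ)
    (S : Finset (Fin n)) : ℝ :=
  ((∑ i, p0vec W θ ω S i) + 1) / (n + 1)

lemma aux_closed {n : ℕ} (W : Matrix (Fin n) (Fin n) ℝ)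
    (hW0 : ∀ i j, 0 ≤ W i j)
    (hconn : ∀ i j : Fin n, ∃ k, 1 ≤ k ∧ 0 < (W ^ k) i j)
    (P : Fin n → Prop) (hP : ∀ k l, P k → 0 < W k l → P l) (k : Fin n) (hk : P k) :
    ∀ l, P l := by
  have key : ∀ t : ℕ, ∀ l, (W ^ t) k l ≠ 0 → P l := by
    intro t
    induction t with
    | zero =>
      intro l hl
      by_cases h : k = l
      · exact h ▸ hk
      · simp [h] at hl
    | succ t ih =>
      intro l hl
      rw [pow_succ, Matrix.mul_apply] at hl
      obtain ⟨m, _, hm⟩ := Finset.exists_ne_zero_of_sum_ne_zero hl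
      have h1 := left_ne_zero_of_mul hm
      have h2 := right_ne_zero_of_mul hm
      exact hP m l (ih m h1) (lt_of_le_of_ne (hW0 m l) (Ne.symm h2))
  intro l
  obtain ⟨t, _, ht⟩ := hconn k l
  exact key t l ht.ne'

lemma aux_min {n : ℕ} (W : Matrix (Fin n) (Fin n) ℝ)
    (hW0 : ∀ i j, 0 ≤ W i j) (hW1 : ∀ i, ∑ j, W i j = 1)
    (hconn : ∀ i j : Fin n, ∃ k, 1 ≤ k ∧ 0 < (W ^ k) i j)
    (c : Fin n → ℝ) (hc0 : ∀ k, 0 ≤ c k) (hc1 : ∀ k, c k ≤ 1) (j : Fin n) (hj : c j < 1)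
    (x : Fin n → ℝ) (hx : ∀ k, c k * (W *ᵥ x) k ≤ x k) : ∀ k, 0 ≤ x k := by
  obtain ⟨m, _, hm⟩ := Finset.exists_min_image Finset.univ x ⟨j, Finset.mem_univ j⟩
  by_contra hcon
  have hneg : x m < 0 := by
    push Not at hcon
    obtain ⟨k, hk⟩ := hcon
    exact (hm k (Finset.mem_univ k)).trans_lt hk
  have hdiff : ∀ k, (W *ᵥ x) k - x m = ∑ l, W k l * (x l - x m) := by
    intro k
    simp only [mul_sub, Finset.sum_sub_distrib, ← Finset.sum_mul, hW1, one_mul]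
    rfl
  have hnn : ∀ k l, 0 ≤ W k l * (x l - x m) := fun k l =>
    mul_nonneg (hW0 k l) (sub_nonneg.2 (hm l (Finset.mem_univ l)))
  have hWx : ∀ k, x m ≤ (W *ᵥ x) k := fun k => by
    have := Finset.sum_nonneg (fun l (_ : l ∈ Finset.univ) => hnn k l)
    linarith [hdiff k]
  have hone : ∀ k, x k = x m → c k = 1 := by
    intro k hk
    have h1 := hx k
    have h2 := mul_le_mul_of_nonneg_left (hWx k) (hc0 k)
    have h3 := hc1 k
    nlinarith
  have hall := aux_closed W hW0 hconn (fun k => x k = x m) (by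
    intro k l hk hkl
    have h1 := hx k
    rw [hone k hk, hk, one_mul] at h1
    have h2 : ∑ l, W k l * (x l - x m) = 0 := by
      rw [← hdiff k]; linarith [hWx k]
    have h3 := (Finset.sum_eq_zero_iff_of_nonneg (fun l _ => hnn k l)).1 h2 l (Finset.mem_univ l)
    rcases mul_eq_zero.1 h3 with h | h
    · exact absurd h hkl.ne'
    · exact sub_eq_zero.1 h) m rfl
  exact absurd (hone j (hall j)) hj.ne

lemma aux_H {n : ℕ} (W : Matrix (Fin n) (Fin n) ℝ) (θ : Fin n → ℝ) (ω : ℝ)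
    (S : Finset (Fin n)) (x : Fin n → ℝ) (k : Fin n) :
    (Hmat W θ ω S *ᵥ x) k = ((1 - (if k ∈ S then ω else 0)) * (1 - θ k)) * (W *ᵥ x) k := by
  unfold Hmat
  rw [← Matrix.mulVec_mulVec, ← Matrix.mulVec_mulVec, Matrix.sub_mulVec, Matrix.sub_mulVec]
  simp only [Matrix.one_mulVec, Pi.sub_apply, Matrix.mulVec_diagonal]
  ring

lemma aux_fix {n : ℕ} (W : Matrix (Fin n) (Fin n) ℝ)
    (hW0 : ∀ i j, 0 ≤ W i j) (hW1 : ∀ i, ∑ j, W i j = 1)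
    (hconn : ∀ i j : Fin n, ∃ k, 1 ≤ k ∧ 0 < (W ^ k) i j)
    (θ : Fin n → ℝ) (ω : ℝ) (S : Finset (Fin n))
    (hc0 : ∀ k, 0 ≤ (1 - (if k ∈ S then ω else 0)) * (1 - θ k))
    (hc1 : ∀ k, (1 - (if k ∈ S then ω else 0)) * (1 - θ k) ≤ 1)
    (j : Fin n) (hj : (1 - (if j ∈ S then ω else 0)) * (1 - θ j) < 1) (k : Fin n) :
    p0vec W θ ω S k = ((1 - (if k ∈ S then ω else 0)) * (1 - θ k)) * (W *ᵥ p0vec W θ ω S) k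
      + (1 - θ k) * (if k ∈ S then ω else 0) := by
  have hinj : Function.Injective (1 - Hmat W θ ω S).mulVec := by
    intro x y hxy
    have h0 : ∀ k, (x - y) k = ((1 - (if k ∈ S then ω else 0)) * (1 - θ k)) * (W *ᵥ (x - y)) k := by
      intro k
      rw [← aux_H]
      have : (1 - Hmat W θ ω S) *ᵥ (x - y) = 0 := by
        rw [Matrix.mulVec_sub]; exact sub_eq_zero.2 hxy
      have := congrFun this k
      rw [Matrix.sub_mulVec, Matrix.one_mulVec] at this
      simp only [Pi.sub_apply, Pi.zero_apply] at this ⊢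
      linarith
    have h1 := aux_min W hW0 hW1 hconn _ hc0 hc1 j hj (x - y) (fun k => (h0 k).ge)
    have h2 := aux_min W hW0 hW1 hconn _ hc0 hc1 j hj (-(x - y)) (fun k => by
      rw [Matrix.mulVec_neg, Pi.neg_apply, Pi.neg_apply, h0 k]
      linarith [h0 k])
    funext k
    have a := h1 k
    have b := h2 k
    simp only [Pi.sub_apply, Pi.neg_apply] at a b
    linarith
  have hu : IsUnit (1 - Hmat W θ ω S) := Matrix.mulVec_injective_iff_isUnit.1 hinj
  have hd : IsUnit (1 - Hmat W θ ω S).det := (Matrix.isUnit_iff_isUnit_det _).1 hu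
  have h : (1 - Hmat W θ ω S) *ᵥ p0vec W θ ω S =
      (1 - Matrix.diagonal θ) *ᵥ (fun j => if j ∈ S then ω else 0) := by
    conv_lhs => unfold p0vec
    rw [Matrix.mulVec_mulVec, ← mul_assoc, Matrix.mul_nonsing_inv _ hd, one_mul]
  have h := congrFun h k
  rw [Matrix.sub_mulVec, Matrix.sub_mulVec] at h
  simp only [Matrix.one_mulVec, Pi.sub_apply, Matrix.mulVec_diagonal, aux_H] at h
  linarith

/-- Adding a link strictly increases the influencer's social power. -/
theorem sp0_strict_monotone
    (n : ℕ) (hn : 1 ≤ n) (W : Matrix (Fin n) (Fin n) ℝ)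
    (hW0 : ∀ i j, 0 ≤ W i j) (hW1 : ∀ i, ∑ j, W i j = 1)
    (hconn : ∀ i j : Fin n, ∃ k, 1 ≤ k ∧ 0 < (W ^ k) i j)
    (θ : Fin n → ℝ) (hθ : ∀ i, θ i ∈ Set.Icc (0 : ℝ) 1) (hθpos : ∃ j, 0 < θ j)
    (ω : ℝ) (hω : ω ∈ Set.Ioo (0 : ℝ) 1)
    (S : Finset (Fin n)) (i : Fin n) (hiS : i ∉ S) (hθi : θ i < 1) :
    sp0 W θ ω S < sp0 W θ ω (insert i S) := by
  obtain ⟨j, hj⟩ := hθpos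
  obtain ⟨hω0, hω1⟩ := hω
  have ha0 : ∀ (T : Finset (Fin n)) k, 0 < 1 - (if k ∈ T then ω else 0) := by
    intro T k; split_ifs <;> linarith
  have ha1 : ∀ (T : Finset (Fin n)) k, 1 - (if k ∈ T then ω else 0) ≤ 1 := by
    intro T k; split_ifs <;> linarith
  have hc0 : ∀ (T : Finset (Fin n)) k, 0 ≤ (1 - (if k ∈ T then ω else 0)) * (1 - θ k) :=
    fun T k => mul_nonneg (ha0 T k).le (by linarith [(hθ k).2])
  have hc2 : ∀ (T : Finset (Fin n)) k, (1 - (if k ∈ T then ω else 0)) * (1 - θ k) ≤ 1 - θ k :=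
    fun T k => mul_le_of_le_one_left (by linarith [(hθ k).2]) (ha1 T k)
  have hc1 : ∀ (T : Finset (Fin n)) k, (1 - (if k ∈ T then ω else 0)) * (1 - θ k) ≤ 1 :=
    fun T k => (hc2 T k).trans (by linarith [(hθ k).1])
  have hcj : ∀ (T : Finset (Fin n)), (1 - (if j ∈ T then ω else 0)) * (1 - θ j) < 1 :=
    fun T => (hc2 T j).trans_lt (by linarith)
  have hfix := fun T => aux_fix W hW0 hW1 hconn θ ω T (hc0 T) (hc1 T) j (hcj T)
  have hp := hfix S
  have hq := hfix (insert i S)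
  set p := p0vec W θ ω S with hpdef
  set q := p0vec W θ ω (insert i S) with hqdef
  -- y = 1 - p
  have hWy : ∀ k, (W *ᵥ (fun l => 1 - p l)) k = 1 - (W *ᵥ p) k := by
    intro k
    simp only [Matrix.mulVec, dotProduct, mul_sub, mul_one, Finset.sum_sub_distrib, hW1]
  have hy : ∀ k, 1 - p k = θ k + ((1 - (if k ∈ S then ω else 0)) * (1 - θ k)) *
      (W *ᵥ (fun l => 1 - p l)) k := by
    intro k
    rw [hWy]; linear_combination - hp k
  have hy0 : ∀ k, 0 ≤ 1 - p k := aux_min W hW0 hW1 hconn _ (hc0 S) (hc1 S) j (hcj S)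
    (fun l => 1 - p l) (fun k => by
      have := hy k
      have := (hθ k).1
      linarith)
  have hnn : ∀ k l, 0 ≤ W k l * (1 - p l) := fun k l => mul_nonneg (hW0 k l) (hy0 l)
  have hsumW : ∀ (x : Fin n → ℝ) k, (W *ᵥ x) k = ∑ l, W k l * x l := fun x k => rfl
  have hWy0 : ∀ k, 0 ≤ (W *ᵥ (fun l => 1 - p l)) k := fun k => by
    rw [hsumW]
    exact Finset.sum_nonneg (fun l _ => hnn k l)
  have hypos : ∀ k, 1 - p k ≠ 0 := by
    intro k hk
    have hall := aux_closed W hW0 hconn (fun k => 1 - p k = 0) (by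
      intro k l hk hkl
      have h1 := hy k
      have h2 := mul_nonneg (hc0 S k) (hWy0 k)
      have h3 := (hθ k).1
      have h4 : θ k = 0 := by linarith
      have h5 : (1 - (if k ∈ S then ω else 0)) * (1 - θ k) *
        (W *ᵥ (fun l => 1 - p l)) k = 0 := by linarith
      rw [h4, sub_zero, mul_one] at h5
      have h6 : (W *ᵥ (fun l => 1 - p l)) k = 0 :=
        (mul_eq_zero.1 h5).resolve_left (ha0 S k).ne'
      rw [hsumW] at h6
      have h7 := (Finset.sum_eq_zero_iff_of_nonneg (fun l _ => hnn k l)).1 h6 l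
        (Finset.mem_univ l)
      exact (mul_eq_zero.1 h7).resolve_left hkl.ne') k hk
    have := hall j
    have := hy j
    have := mul_nonneg (hc0 S j) (hWy0 j)
    linarith
  have hWi : 0 < 1 - (W *ᵥ p) i := by
    rw [← hWy]
    refine lt_of_le_of_ne (hWy0 i) (fun h => ?_)
    rw [hsumW] at h
    have h7 := (Finset.sum_eq_zero_iff_of_nonneg (fun l _ => hnn i l)).1 h.symm
    have : ∑ l, W i l = 0 := Finset.sum_eq_zero (fun l hl =>
      (mul_eq_zero.1 (h7 l hl)).resolve_right (hypos l))
    rw [hW1] at this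
    exact one_ne_zero this
  have hd : ∀ k, (q - p) k = ((1 - (if k ∈ insert i S then ω else 0)) * (1 - θ k)) *
      (W *ᵥ (q - p)) k + (if k = i then ω * (1 - θ i) * (1 - (W *ᵥ p) i) else 0) := by
    intro k
    rw [Matrix.mulVec_sub, Pi.sub_apply, Pi.sub_apply]
    have h1 := hp k
    have h2 := hq k
    by_cases hk : k = i
    · subst hk
      simp only [Finset.mem_insert, true_or, if_true, hiS, if_false] at h1 h2 ⊢
      linear_combination h2 - h1
    · simp only [Finset.mem_insert, hk, false_or, if_false] at h1 h2 ⊢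
      linear_combination h2 - h1
  have hpos : 0 < ω * (1 - θ i) * (1 - (W *ᵥ p) i) :=
    mul_pos (mul_pos hω0 (by linarith)) hWi
  have hd0 : ∀ k, 0 ≤ (q - p) k := aux_min W hW0 hW1 hconn _ (hc0 _) (hc1 _) j
    (hcj (insert i S)) (q - p) (fun k => by
      have := hd k
      have : (0:ℝ) ≤ (if k = i then ω * (1 - θ i) * (1 - (W *ᵥ p) i) else 0) := by
        split_ifs
        · exact hpos.le
        · exact le_rfl
      linarith)
  have hdi : 0 < (q - p) i := by
    rw [hd i, if_pos rfl]
    rw [hsumW (q - p)]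
    have := mul_nonneg (hc0 (insert i S) i)
      (Finset.sum_nonneg (fun l (_ : l ∈ Finset.univ) => mul_nonneg (hW0 i l) (hd0 l)))
    linarith
  have hsum : ∑ k, p k < ∑ k, q k := by
    apply Finset.sum_lt_sum
    · intro k _
      have := hd0 k
      rw [Pi.sub_apply] at this
      linarith
    · refine ⟨i, Finset.mem_univ i, ?_⟩
      rw [Pi.sub_apply] at hdi
      linarith
  unfold sp0
  rw [← hpdef, ← hqdef]
  have : (0:ℝ) < n + 1 := by positivity
  gcongr
end

section
/- Assume homogeneous stubbornness: θ_i = θ for all i ∈ V with θ ∈ (0,1), and let ω ∈ [0,1). Then I − H(S) is invertible for every S ⊆ V, and the influencer's social power admits the representation sp₀(S) = (n + 1 − n θ f(S; θ, ω)) / (n + 1), where f(S; θ, ω) = (1/n) 𝟙ᵀ ( I − (1 − θ)(I − ω Σ_{j∈S} e_j e_jᵀ) W )^{-1} 𝟙. (Consequently, maximizing sp₀ over S is equivalent to minimizing f(S; θ, ω).) -/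
open Matrix Finset

/-- Under homogeneous stubbornness, `sp₀(S) = (n + 1 - nθ f(S;θ,ω))/(n+1)`. -/
theorem sp0_eq_hitting_time_functional
    (n : ℕ) (hn : 1 ≤ n) (W : Matrix (Fin n) (Fin n) ℝ)
    (hW0 : ∀ i j, 0 ≤ W i j) (hW1 : ∀ i, ∑ j, W i j = 1)
    (θ : ℝ) (hθ : θ ∈ Set.Ioo (0 : ℝ) 1) (ω : ℝ) (hω : ω ∈ Set.Ico (0 : ℝ) 1)
    (S : Finset (Fin n)) :
    IsUnit (1 - Hmat W (fun _ => θ) ω S) ∧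
    sp0 W (fun _ => θ) ω S =
      ((n : ℝ) + 1 - n * θ * ((1 / n) * ∑ i,
        ((1 - (1 - θ) •
            ((1 - Matrix.diagonal (fun i => if i ∈ S then ω else 0)) * W))⁻¹).mulVec
          (fun _ => (1 : ℝ)) i)) / (n + 1) := by
  obtain ⟨hθ0, hθ1⟩ := hθ
  obtain ⟨hω0, hω1⟩ := hω
  set d : Fin n → ℝ := fun i => if i ∈ S then ω else 0 with hd
  have hd0 : ∀ i, 0 ≤ d i := by
    intro i; simp only [hd]; split_ifs <;> linarith
  have hd1 : ∀ i, d i < 1 := by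
    intro i; simp only [hd]; split_ifs <;> linarith
  have hdiag : (1 - Matrix.diagonal (fun _ : Fin n => θ)) = (1 - θ) • (1 : Matrix (Fin n) (Fin n) ℝ) := by
    rw [sub_smul, one_smul, Matrix.smul_one_eq_diagonal]
  have hH : Hmat W (fun _ => θ) ω S = (1 - θ) • ((1 - Matrix.diagonal d) * W) := by
    unfold Hmat
    rw [hdiag, Matrix.smul_mul, Matrix.one_mul, Matrix.mul_smul]
  set A := 1 - (1 - θ) • ((1 - Matrix.diagonal d) * W) with hA
  have hent : ∀ i j, A i j = (1 : Matrix (Fin n) (Fin n) ℝ) i j - (1 - θ) * ((1 - d i) * W i j) := by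
    intro i j
    rw [hA, Matrix.sub_apply, Matrix.smul_apply, Matrix.sub_mul, Matrix.sub_apply, Matrix.one_mul,
      Matrix.diagonal_mul, smul_eq_mul]
    ring
  have hdet : A.det ≠ 0 := by
    apply det_ne_zero_of_sum_row_lt_diag
    intro k
    have hc0 : 0 ≤ (1 - θ) * (1 - d k) :=
      mul_nonneg (by linarith) (by linarith [hd1 k])
    have hc1 : (1 - θ) * (1 - d k) < 1 := by nlinarith [hd0 k, hd1 k]
    have h1 : ∑ j ∈ Finset.univ.erase k, ‖A k j‖ =
        ∑ j ∈ Finset.univ.erase k, (1 - θ) * (1 - d k) * W k j := by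
      apply Finset.sum_congr rfl
      intro j hj
      rw [hent, Matrix.one_apply_ne (Finset.ne_of_mem_erase hj).symm, zero_sub, norm_neg,
        ← mul_assoc, Real.norm_of_nonneg (mul_nonneg hc0 (hW0 k j))]
    have h2 := Finset.add_sum_erase Finset.univ (fun j => W k j) (Finset.mem_univ k)
    simp only [hW1 k] at h2
    rw [h1, ← Finset.mul_sum, hent, Matrix.one_apply_eq]
    refine lt_of_lt_of_le ?_ (le_abs_self _)
    have h3 : ∑ j ∈ Finset.univ.erase k, W k j = 1 - W k k := by linarith
    rw [h3]
    linarith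
  have hu : IsUnit A.det := isUnit_iff_ne_zero.mpr hdet
  have hone : A.mulVec (fun _ => (1 : ℝ)) = θ • (fun _ => (1 : ℝ)) + (1 - θ) • d := by
    funext i
    have : A.mulVec (fun _ => (1 : ℝ)) i = ∑ j, A i j := by
      simp [Matrix.mulVec, dotProduct]
    rw [this]
    simp only [hent, Finset.sum_sub_distrib, ← Finset.mul_sum, hW1, Pi.add_apply, Pi.smul_apply,
      smul_eq_mul, Matrix.one_apply, Finset.sum_ite_eq, Finset.mem_univ, if_true]
    ring
  have hkey : (fun _ => (1 : ℝ)) = θ • A⁻¹.mulVec (fun _ => (1 : ℝ)) + (1 - θ) • A⁻¹.mulVec d := by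
    have := congrArg (fun v => A⁻¹.mulVec v) hone
    simpa only [Matrix.mulVec_mulVec, Matrix.nonsing_inv_mul A hu, Matrix.one_mulVec,
      Matrix.mulVec_add, Matrix.mulVec_smul] using this
  have hp : ∀ i, p0vec W (fun _ => θ) ω S i = 1 - θ * A⁻¹.mulVec (fun _ => (1 : ℝ)) i := by
    intro i
    have h := congrFun hkey i
    simp only [Pi.add_apply, Pi.smul_apply, smul_eq_mul] at h
    unfold p0vec
    rw [hH, hdiag, Matrix.mul_smul, Matrix.mul_one, Matrix.smul_mulVec, Pi.smul_apply, smul_eq_mul]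
    linarith
  refine ⟨by rw [hH]; exact (Matrix.isUnit_iff_isUnit_det A).mpr hu, ?_⟩
  have hn0 : (n : ℝ) ≠ 0 := by positivity
  unfold sp0
  congr 1
  simp only [hp, Finset.sum_sub_distrib, ← Finset.mul_sum]
  simp only [Finset.sum_const, Finset.card_univ, Fintype.card_fin, nsmul_eq_mul, mul_one]
  field_simp
  ring
end

section
/- Assume W is strongly connected, ω ∈ (0,1), and homogeneous stubbornness θ_i = θ for all i ∈ V. For each i ∈ V define g_i = (1 − ω) W_{ii} + Σ_{j ≠ i} W_{ji}. Suppose there is a unique agent i* with g_{i*} = max_{i∈V} g_i, set δ_g = min{ g_{i*} − g_i : i ∈ V, i ≠ i* }, and assume n/(δ_g + n) < θ < 1. Then {i*} is the unique optimal singleton: sp₀({i*}) > sp₀({i}) for every i ∈ V with i ≠ i*. -/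
open Matrix Finset

theorem aux_nonneg {n : ℕ} (H : Matrix (Fin n) (Fin n) ℝ) (a : ℝ) (ha : a < 1)
    (h0 : ∀ i j, 0 ≤ H i j) (h1 : ∀ i, ∑ j, H i j ≤ a)
    (x : Fin n → ℝ) (hx : ∀ i, ∑ j, H i j * x j ≤ x i) : ∀ i, 0 ≤ x i := by
  intro i
  obtain ⟨m, -, hm⟩ := Finset.exists_min_image Finset.univ x ⟨i, Finset.mem_univ i⟩
  have h2 : (∑ j, H m j) * x m ≤ x m := by
    refine le_trans ?_ (hx m)
    rw [Finset.sum_mul]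
    exact Finset.sum_le_sum fun j _ => mul_le_mul_of_nonneg_left (hm j (Finset.mem_univ j)) (h0 m j)
  have h3 := h1 m
  have h4 : 0 ≤ x m := by
    by_contra hc
    push Not at hc
    nlinarith
  exact h4.trans (hm i (Finset.mem_univ i))

theorem aux_unit {n : ℕ} (H : Matrix (Fin n) (Fin n) ℝ) (a : ℝ) (ha : a < 1)
    (h0 : ∀ i j, 0 ≤ H i j) (h1 : ∀ i, ∑ j, H i j ≤ a) : IsUnit (1 - H).det := by
  rw [isUnit_iff_ne_zero]
  intro hdet
  obtain ⟨v, hv, hv0⟩ := Matrix.exists_mulVec_eq_zero_iff.mpr hdet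
  apply hv
  have key : ∀ i, ∑ j, H i j * v j = v i := by
    intro i
    have := congrFun hv0 i
    rw [Matrix.sub_mulVec, Matrix.one_mulVec] at this
    simp only [Pi.sub_apply, Pi.zero_apply, Matrix.mulVec, dotProduct] at this
    linarith
  have p1 := aux_nonneg H a ha h0 h1 v (fun i => (key i).le)
  have p2 := aux_nonneg H a ha h0 h1 (fun i => - v i) (fun i => by
    simp only [mul_neg, Finset.sum_neg_distrib, key i, le_refl])
  funext i
  have := p1 i
  have := p2 i
  simp only [Pi.zero_apply]
  linarith

theorem aux_sum {n : ℕ} (W : Matrix (Fin n) (Fin n) ℝ)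
    (hW0 : ∀ i j, 0 ≤ W i j) (hW1 : ∀ i, ∑ j, W i j = 1)
    (ω : ℝ) (hω : ω ∈ Set.Ioo (0 : ℝ) 1) (θ : ℝ) (hθ0 : 0 < θ) (hθ1 : θ < 1) (i : Fin n) :
    ∃ R : ℝ, 0 ≤ R ∧ R ≤ n * (1 - θ) ^ 2 / θ ∧
      ∑ k, p0vec W (fun _ => θ) ω {i} k = (1 - θ) * ω *
        (1 + (1 - θ) * ((1 - ω) * W i i + ∑ j ∈ Finset.univ.erase i, W j i) + R) := by
  obtain ⟨hω0, hω1⟩ := hω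
  set H := Hmat W (fun _ => θ) ω {i} with hH
  have hent : ∀ k l, H k l = (1 - if k = i then ω else 0) * ((1 - θ) * W k l) := by
    intro k l
    have e1 : (1 - Matrix.diagonal (fun j => if j ∈ ({i} : Finset (Fin n)) then ω else 0))
        = Matrix.diagonal (fun j => 1 - if j = i then ω else 0) := by
      rw [← Matrix.diagonal_one, Matrix.diagonal_sub]
      simp
    have e2 : (1 - Matrix.diagonal (fun _ : Fin n => θ))
        = Matrix.diagonal (fun _ => 1 - θ) := by
      rw [← Matrix.diagonal_one, Matrix.diagonal_sub]
    rw [hH, Hmat, e1, e2, Matrix.diagonal_mul, Matrix.diagonal_mul]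
  have hc : ∀ k, 0 ≤ (1 - if k = i then ω else 0) ∧ (1 - if k = i then ω else 0) ≤ 1 := by
    intro k
    split_ifs <;> constructor <;> linarith
  have h0 : ∀ k l, 0 ≤ H k l := by
    intro k l
    rw [hent]
    exact mul_nonneg (hc k).1 (mul_nonneg (by linarith) (hW0 k l))
  have h1 : ∀ k, ∑ l, H k l ≤ 1 - θ := by
    intro k
    simp only [hent]
    rw [← Finset.mul_sum, ← Finset.mul_sum, hW1]
    have := (hc k).2
    nlinarith
  have ha : 1 - θ < 1 := by linarith
  have hu := aux_unit H (1 - θ) ha h0 h1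
  set x : Fin n → ℝ := (1 - H)⁻¹.mulVec (Pi.single i 1) with hx
  have hp : ∀ k, p0vec W (fun _ => θ) ω {i} k = (1 - θ) * ω * x k := by
    intro k
    have e2 : (1 - Matrix.diagonal (fun _ : Fin n => θ))
        = (1 - θ) • (1 : Matrix (Fin n) (Fin n) ℝ) := by
      rw [← Matrix.diagonal_one, Matrix.diagonal_sub, ← Matrix.diagonal_smul]
      congr 1
      funext j
      simp
    have e3 : (fun j => if j ∈ ({i} : Finset (Fin n)) then ω else 0)
        = ω • (Pi.single i 1 : Fin n → ℝ) := by
      funext j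
      simp [Pi.single_apply]
    rw [p0vec, ← hH, e2, e3, Matrix.mulVec_smul, Matrix.mul_smul, Matrix.mul_one,
      Matrix.smul_mulVec, ← hx]
    simp only [Pi.smul_apply, smul_eq_mul]
    ring
  have hfix : ∀ k, x k = (if k = i then 1 else 0) + ∑ l, H k l * x l := by
    intro k
    have : (1 - H).mulVec x = Pi.single i 1 := by
      rw [hx, Matrix.mulVec_mulVec, Matrix.mul_nonsing_inv _ hu, Matrix.one_mulVec]
    have := congrFun this k
    rw [Matrix.sub_mulVec, Matrix.one_mulVec] at this
    simp only [Pi.sub_apply, Matrix.mulVec, dotProduct, Pi.single_apply] at this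
    linarith
  have x0 : ∀ k, 0 ≤ x k := aux_nonneg H _ ha h0 h1 x (fun k => by
    have := hfix k
    have : (0:ℝ) ≤ if k = i then 1 else 0 := by split_ifs <;> norm_num
    linarith)
  have x1 : ∀ k, 0 ≤ 1 / θ - x k := aux_nonneg H _ ha h0 h1 (fun k => 1 / θ - x k) (fun k => by
    have e1 := hfix k
    have e2 : (if k = i then (1:ℝ) else 0) ≤ 1 := by split_ifs <;> norm_num
    simp only [mul_sub, Finset.sum_sub_distrib, ← Finset.sum_mul]
    have e3 : (∑ l, H k l) * (1 / θ) ≤ (1 - θ) * (1 / θ) :=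
      mul_le_mul_of_nonneg_right (h1 k) (by positivity)
    have e4 : (1 - θ) * (1 / θ) = 1 / θ - 1 := by field_simp
    linarith)
  have hHx0 : ∀ k, 0 ≤ ∑ l, H k l * x l := fun k =>
    Finset.sum_nonneg fun l _ => mul_nonneg (h0 k l) (x0 l)
  have bound : ∀ (y : Fin n → ℝ) (c : ℝ), 0 ≤ c → (∀ k, y k ≤ c) →
      ∀ k, ∑ l, H k l * y l ≤ (1 - θ) * c := by
    intro y c hc0 hy k
    calc ∑ l, H k l * y l ≤ ∑ l, H k l * c :=
          Finset.sum_le_sum fun l _ => mul_le_mul_of_nonneg_left (hy l) (h0 k l)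
      _ = (∑ l, H k l) * c := by rw [Finset.sum_mul]
      _ ≤ _ := mul_le_mul_of_nonneg_right (h1 k) hc0
  have b1 := bound x (1 / θ) (by positivity) (fun k => by linarith [x1 k])
  have b2 := bound (fun k => ∑ l, H k l * x l) _
    (mul_nonneg (by linarith) (by positivity)) b1
  refine ⟨∑ k, ∑ l, H k l * ∑ m, H l m * x m, ?_, ?_, ?_⟩
  · exact Finset.sum_nonneg fun k _ => Finset.sum_nonneg fun l _ => mul_nonneg (h0 k l) (hHx0 l)
  · calc _ ≤ ∑ k : Fin n, (1 - θ) * ((1 - θ) * (1 / θ)) := Finset.sum_le_sum fun k _ => b2 k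
      _ = _ := by
        simp only [Finset.sum_const, Finset.card_univ, Fintype.card_fin, nsmul_eq_mul]
        ring
  · simp only [hp]
    rw [← Finset.mul_sum]
    congr 1
    have hk : ∀ k, x k = (if k = i then 1 else 0) + H k i
        + ∑ l, H k l * ∑ m, H l m * x m := by
      intro k
      have e : ∑ l, H k l * x l = H k i + ∑ l, H k l * ∑ m, H l m * x m := by
        calc ∑ l, H k l * x l = ∑ l, H k l * ((if l = i then 1 else 0) + ∑ m, H l m * x m) :=
              Finset.sum_congr rfl fun l _ => by rw [← hfix l]
          _ = _ := by
              simp only [mul_add, Finset.sum_add_distrib]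
              simp
      have := hfix k
      linarith
    rw [Finset.sum_congr rfl fun k _ => hk k, Finset.sum_add_distrib, Finset.sum_add_distrib]
    congr 1
    congr 1
    · simp
    · rw [← Finset.add_sum_erase _ _ (Finset.mem_univ i), mul_add, Finset.mul_sum]
      congr 1
      · rw [hent]
        simp only [if_true]
        ring
      · refine Finset.sum_congr rfl fun j hj => ?_
        rw [hent, if_neg (Finset.ne_of_mem_erase hj)]
        ring

/-- For large homogeneous stubbornness, the agent `i*` maximizing
`g_i = (1-ω) W_{ii} + Σ_{j≠i} W_{ji}` is the unique optimal singleton choice. -/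
theorem big_stubbornness_optimal_singleton
    (n : ℕ) (hn : 1 ≤ n) (W : Matrix (Fin n) (Fin n) ℝ)
    (hW0 : ∀ i j, 0 ≤ W i j) (hW1 : ∀ i, ∑ j, W i j = 1)
    (hconn : ∀ i j : Fin n, ∃ k, 1 ≤ k ∧ 0 < (W ^ k) i j)
    (ω : ℝ) (hω : ω ∈ Set.Ioo (0 : ℝ) 1)
    (g : Fin n → ℝ)
    (hg : ∀ i, g i = (1 - ω) * W i i + ∑ j ∈ Finset.univ.erase i, W j i)
    (istar : Fin n) (hstar : ∀ i, i ≠ istar → g i < g istar)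
    (δg : ℝ) (hδg : IsLeast {d : ℝ | ∃ i, i ≠ istar ∧ d = g istar - g i} δg)
    (θ : ℝ) (hθlo : (n : ℝ) / (δg + n) < θ) (hθhi : θ < 1) :
    ∀ i, i ≠ istar → sp0 W (fun _ => θ) ω {i} < sp0 W (fun _ => θ) ω {istar} := by
  intro i hi
  have hn' : (1:ℝ) ≤ n := by exact_mod_cast hn
  have hδ0 : 0 < δg := by
    obtain ⟨j, hj, e⟩ := hδg.1
    linarith [hstar j hj]
  have hθ0 : 0 < θ := lt_trans (by positivity) hθlo
  have hδi : δg ≤ g istar - g i := hδg.2 ⟨i, hi, rfl⟩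
  rw [div_lt_iff₀ (by positivity)] at hθlo
  obtain ⟨R, -, hR, e⟩ := aux_sum W hW0 hW1 ω hω θ hθ0 hθhi i
  obtain ⟨R', hR', -, e'⟩ := aux_sum W hW0 hW1 ω hω θ hθ0 hθhi istar
  rw [← hg] at e e'
  have ha : 0 < 1 - θ := by linarith
  have hb : n * (1 - θ) ^ 2 / θ < (1 - θ) * δg := by
    rw [div_lt_iff₀ hθ0]
    have : n * (1 - θ) < θ * δg := by nlinarith
    nlinarith
  unfold sp0
  rw [e, e']
  have h3 : (1 - θ) * δg ≤ (1 - θ) * (g istar - g i) := mul_le_mul_of_nonneg_left hδi ha.le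
  have hc : 0 < (1 - θ) * ω := mul_pos ha hω.1
  apply div_lt_div_of_pos_right _ (by positivity)
  have := mul_lt_mul_of_pos_left (show 1 + (1 - θ) * g i + R < 1 + (1 - θ) * g istar + R' by linarith) hc
  linarith
end

section
/- Suppose the weight matrix has rank one: W = 𝟙 cᵀ, where c ∈ ℝⁿ satisfies c_j > 0 for all j and Σ_j c_j = 1. Let θ_i ∈ [0,1] for all i, assume Σ_{j∈V} c_j θ_j > 0, and let ω ∈ (0,1). Then for every S ⊆ V, the matrix I − H(S) is invertible and the influencer's social power equals sp₀(S) = 1/(n+1) + ω [ (Σ_{j∈V} c_j θ_j)(Σ_{j∈S} (1 − θ_j)) + (Σ_{j∈V} (1 − θ_j))(Σ_{j∈S} c_j (1 − θ_j)) ] / [ (n+1) ( Σ_{j∈V} c_j θ_j + ω Σ_{j∈S} c_j (1 − θ_j) ) ]. -/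
open Matrix Finset

/-- The rank-one matrix `𝟙 cᵀ`. -/
def rankOne {n : ℕ} (c : Fin n → ℝ) : Matrix (Fin n) (Fin n) ℝ :=
  Matrix.of fun _ j => c j

theorem aux_inv {n : ℕ} (u c : Fin n → ℝ) (D : ℝ) (hD : D ≠ 0) (h : c ⬝ᵥ u = 1 - D) :
    (1 - vecMulVec u c) * (1 + D⁻¹ • vecMulVec u c) = 1 := by
  have hh : vecMulVec u c * vecMulVec u c = (1 - D) • vecMulVec u c := by
    rw [vecMulVec_mul_vecMulVec, h]
    ext i j
    simp [vecMulVec_apply]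
    try ring
  rw [sub_mul, mul_add, mul_add, one_mul, mul_one, one_mul, mul_smul_comm, hh, smul_smul]
  ext i j
  simp only [Matrix.sub_apply, Matrix.add_apply, Matrix.smul_apply, smul_eq_mul]
  field_simp
  ring

/-- Closed form of the influencer's social power for a rank-one weight matrix. -/
theorem sp0_rank_one_formula
    (n : ℕ) (hn : 1 ≤ n) (c : Fin n → ℝ) (hc : ∀ j, 0 < c j) (hc1 : ∑ j, c j = 1)
    (θ : Fin n → ℝ) (hθ : ∀ i, θ i ∈ Set.Icc (0 : ℝ) 1) (hcθ : 0 < ∑ j, c j * θ j)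
    (ω : ℝ) (hω : ω ∈ Set.Ioo (0 : ℝ) 1) (S : Finset (Fin n)) :
    IsUnit (1 - Hmat (rankOne c) θ ω S) ∧
    sp0 (rankOne c) θ ω S =
      1 / (n + 1) +
        ω * ((∑ j, c j * θ j) * (∑ j ∈ S, (1 - θ j)) +
          (∑ j, (1 - θ j)) * (∑ j ∈ S, c j * (1 - θ j))) /
        ((n + 1) * ((∑ j, c j * θ j) + ω * ∑ j ∈ S, c j * (1 - θ j))) := by
  set A := ∑ j, c j * θ j with hA
  set B := ∑ j ∈ S, c j * (1 - θ j) with hB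
  set T := ∑ j ∈ S, (1 - θ j) with hT
  set N := ∑ j, (1 - θ j) with hN
  have hB0 : 0 ≤ B := Finset.sum_nonneg fun j _ =>
    mul_nonneg (hc j).le (by linarith [(hθ j).2])
  have hD : 0 < A + ω * B := by
    have := mul_nonneg hω.1.le hB0
    linarith
  let s : Fin n → ℝ := fun j => if j ∈ S then ω else 0
  let u : Fin n → ℝ := fun j => (1 - s j) * (1 - θ j)
  let b : Fin n → ℝ := fun j => (1 - θ j) * s j
  have hH : Hmat (rankOne c) θ ω S = vecMulVec u c := by
    unfold Hmat
    rw [← diagonal_one, diagonal_sub, diagonal_sub]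
    ext i j
    simp [diagonal_mul, vecMulVec_apply, rankOne, u, s, mul_assoc]
  have hcb : c ⬝ᵥ b = ω * B := by
    simp only [hB, Finset.mul_sum, dotProduct, b, s, mul_ite, mul_zero, Finset.sum_ite_mem,
      Finset.univ_inter]
    exact Finset.sum_congr rfl fun i _ => by ring
  have hsb : ∑ i, b i = ω * T := by
    simp only [hT, Finset.mul_sum, b, s, mul_ite, mul_zero, Finset.sum_ite_mem,
      Finset.univ_inter]
    exact Finset.sum_congr rfl fun i _ => by ring
  have hu : ∀ i, u i = (1 - θ i) - b i := fun i => by simp only [u, b]; ring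
  have hsu : ∑ i, u i = N - ω * T := by
    simp only [hu, Finset.sum_sub_distrib, hsb, hN]
  have hcu : c ⬝ᵥ u = 1 - (A + ω * B) := by
    have : c ⬝ᵥ u = ∑ j, c j - ∑ j, c j * θ j - c ⬝ᵥ b := by
      simp only [dotProduct, ← Finset.sum_sub_distrib]
      exact Finset.sum_congr rfl fun i _ => by rw [hu]; ring
    rw [this, hcb, hc1]; ring
  have hinv := aux_inv u c _ hD.ne' hcu
  rw [← hH] at hinv
  refine ⟨IsUnit.of_mul_eq_one _ hinv, ?_⟩
  have hp : ∀ i, p0vec (rankOne c) θ ω S i = b i + (A + ω * B)⁻¹ * (u i * (ω * B)) := by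
    intro i
    have hb : (1 - Matrix.diagonal θ).mulVec s = b := by
      rw [← diagonal_one, diagonal_sub]
      ext i
      simp [mulVec_diagonal, b]
    unfold p0vec
    rw [← mulVec_mulVec, inv_eq_right_inv hinv, hH]
    change ((1 + (A + ω * B)⁻¹ • vecMulVec u c).mulVec ((1 - Matrix.diagonal θ).mulVec s)) i = _
    rw [hb, add_mulVec, one_mulVec, smul_mulVec, vecMulVec_mulVec, hcb]
    simp
  unfold sp0
  simp only [hp, Finset.sum_add_distrib, ← Finset.mul_sum, ← Finset.sum_mul, hsb, hsu]
  have hn1 : (n : ℝ) + 1 ≠ 0 := by positivity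
  have hD' := hD.ne'
  field_simp
  ring
end

section
/- Suppose W = 𝟙 cᵀ with c_j > 0 for all j and Σ_j c_j = 1, homogeneous stubbornness θ_i = θ for all i with θ ∈ (0,1), and ω ∈ (0,1). Fix 1 ≤ K ≤ n and let S₁ ⊆ V be any K-element set consisting of indices of the K largest entries of c, i.e., c_i ≥ c_j for every i ∈ S₁ and j ∉ S₁. Then S₁ maximizes the influencer's social power under the budget K: sp₀(S₁) ≥ sp₀(S) for every S ⊆ V with |S| ≤ K. -/
open Matrix Finset

theorem aux_H_apply {n : ℕ} (c : Fin n → ℝ) (θ ω : ℝ) (S : Finset (Fin n)) (v : Fin n → ℝ)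
    (i : Fin n) :
    ((1 - Hmat (rankOne c) (fun _ => θ) ω S).mulVec v) i =
      v i - (1 - (if i ∈ S then ω else 0)) * (1 - θ) * ∑ j, c j * v j := by
  have h : Hmat (rankOne c) (fun _ => θ) ω S =
      Matrix.of fun i j => (1 - (if i ∈ S then ω else 0)) * ((1 - θ) * c j) := by
    ext i j
    simp only [Hmat, rankOne, sub_mul, one_mul, Matrix.sub_apply, Matrix.diagonal_mul,
      Matrix.of_apply]
  rw [h, Matrix.sub_mulVec, Matrix.one_mulVec, Pi.sub_apply]
  simp only [Matrix.mulVec, dotProduct, Matrix.of_apply, Finset.mul_sum]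
  congr 1
  exact Finset.sum_congr rfl fun j _ => by ring

theorem aux_sum_ite {n : ℕ} (c : Fin n → ℝ) (ω : ℝ) (S : Finset (Fin n)) :
    ∑ j, c j * (if j ∈ S then ω else 0) = ω * ∑ j ∈ S, c j := by
  simp [Finset.mul_sum, mul_comm]

theorem aux_det {n : ℕ} (c : Fin n → ℝ) (hc : ∀ j, 0 < c j) (hc1 : ∑ j, c j = 1)
    (θ : ℝ) (hθ : θ ∈ Set.Ioo (0 : ℝ) 1) (ω : ℝ) (hω : ω ∈ Set.Ioo (0 : ℝ) 1)
    (S : Finset (Fin n)) : IsUnit (1 - Hmat (rankOne c) (fun _ => θ) ω S).det := by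
  rw [isUnit_iff_ne_zero]
  intro h0
  obtain ⟨v, hv, hv0⟩ := Matrix.exists_mulVec_eq_zero_iff.2 h0
  have hp : ∀ i, v i = (1 - (if i ∈ S then ω else 0)) * (1 - θ) * ∑ j, c j * v j := fun i => by
    have := congrFun hv0 i
    rw [aux_H_apply] at this
    simpa [sub_eq_zero] using this
  have hC0 : 0 ≤ ∑ j ∈ S, c j := Finset.sum_nonneg fun j _ => (hc j).le
  set x := ∑ j, c j * v j with hx
  have hxe : x = (1 - ω * ∑ j ∈ S, c j) * (1 - θ) * x := by
    calc x = ∑ j, (c j - c j * (if j ∈ S then ω else 0)) * ((1 - θ) * x) := by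
          rw [hx]
          refine Finset.sum_congr rfl fun j _ => ?_
          rw [← hx, hp j]; ring
      _ = _ := by rw [← Finset.sum_mul, Finset.sum_sub_distrib, hc1, aux_sum_ite]; ring
  have hx0 : x = 0 := by
    have h1 : 0 < 1 - (1 - ω * ∑ j ∈ S, c j) * (1 - θ) := by
      have := mul_nonneg (mul_nonneg hω.1.le hC0) (sub_nonneg.2 hθ.2.le)
      have := hθ.1
      nlinarith
    have h2 : (1 - (1 - ω * ∑ j ∈ S, c j) * (1 - θ)) * x = 0 := by linarith
    exact (mul_eq_zero.1 h2).resolve_left h1.ne'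
  exact hv (funext fun i => by rw [hp i, hx0]; simp)

theorem aux_sum_p {n : ℕ} (c : Fin n → ℝ) (hc : ∀ j, 0 < c j) (hc1 : ∑ j, c j = 1)
    (θ : ℝ) (hθ : θ ∈ Set.Ioo (0 : ℝ) 1) (ω : ℝ) (hω : ω ∈ Set.Ioo (0 : ℝ) 1)
    (S : Finset (Fin n)) : ∃ x : ℝ,
      x * (1 - (1 - θ) * (1 - ω * ∑ j ∈ S, c j)) = (1 - θ) * (ω * ∑ j ∈ S, c j) ∧
      ∑ i, p0vec (rankOne c) (fun _ => θ) ω S i =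
        (1 - θ) * (n * x + ω * S.card * (1 - x)) := by
  set p := p0vec (rankOne c) (fun _ => θ) ω S with hpdef
  have hb : (1 - Hmat (rankOne c) (fun _ => θ) ω S).mulVec p =
      (1 - Matrix.diagonal (fun _ => θ)).mulVec (fun j => if j ∈ S then ω else 0) := by
    rw [hpdef, p0vec, ← Matrix.mulVec_mulVec, Matrix.mulVec_mulVec,
      Matrix.mul_nonsing_inv _ (aux_det c hc hc1 θ hθ ω hω S), Matrix.one_mulVec]
  have hp : ∀ i, p i = (1 - (if i ∈ S then ω else 0)) * (1 - θ) * (∑ j, c j * p j)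
      + (1 - θ) * (if i ∈ S then ω else 0) := fun i => by
    have := congrFun hb i
    rw [aux_H_apply, Matrix.sub_mulVec, Matrix.one_mulVec, Pi.sub_apply,
      Matrix.mulVec_diagonal] at this
    linarith
  set x := ∑ j, c j * p j with hx
  refine ⟨x, ?_, ?_⟩
  · have : x = (1 - θ) * x * 1 + (1 - θ) * (1 - x) * (ω * ∑ j ∈ S, c j) := by
      calc x = ∑ j, ((1 - θ) * x * c j +
            (1 - θ) * (1 - x) * (c j * (if j ∈ S then ω else 0))) := by
            conv_lhs => rw [hx]
            refine Finset.sum_congr rfl fun j _ => ?_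
            rw [hp j]; ring
        _ = _ := by
            rw [Finset.sum_add_distrib, ← Finset.mul_sum Finset.univ c,
              ← Finset.mul_sum Finset.univ (fun j => c j * (if j ∈ S then ω else 0)),
              hc1, aux_sum_ite]
    linarith
  · have h1 : ∑ i : Fin n, (if i ∈ S then ω else 0) = ω * S.card := by simp [mul_comm]
    calc ∑ i, p i = ∑ i : Fin n, ((1 - θ) * x + (1 - θ) * (1 - x) * (if i ∈ S then ω else 0)) :=
          Finset.sum_congr rfl fun j _ => by rw [hp j]; ring
      _ = _ := by
          rw [Finset.sum_add_distrib,
            ← Finset.mul_sum Finset.univ (fun i => if i ∈ S then ω else 0), h1,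
            Finset.sum_const, Finset.card_univ, Fintype.card_fin, nsmul_eq_mul]
          ring

theorem aux_top {n : ℕ} (c : Fin n → ℝ) (hc : ∀ j, 0 < c j) (S₁ S : Finset (Fin n))
    (hne : S₁.Nonempty) (hle : S.card ≤ S₁.card)
    (htop : ∀ i ∈ S₁, ∀ j ∉ S₁, c j ≤ c i) : ∑ j ∈ S, c j ≤ ∑ j ∈ S₁, c j := by
  obtain ⟨m, hm, hmin⟩ := S₁.exists_min_image c hne
  have h1 : ∑ j ∈ S \ S₁, c j ≤ (S \ S₁).card • c m :=
    Finset.sum_le_card_nsmul _ _ _ fun j hj => htop m hm j (Finset.mem_sdiff.1 hj).2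
  have h2 : (S₁ \ S).card • c m ≤ ∑ j ∈ S₁ \ S, c j :=
    Finset.card_nsmul_le_sum _ _ _ fun j hj => hmin j (Finset.mem_sdiff.1 hj).1
  have h3 : (S \ S₁).card ≤ (S₁ \ S).card := by
    have a := Finset.card_sdiff_add_card_inter S S₁
    have b := Finset.card_sdiff_add_card_inter S₁ S
    rw [Finset.inter_comm] at b
    omega
  have h4 : (S \ S₁).card • c m ≤ (S₁ \ S).card • c m := nsmul_le_nsmul_left (hc m).le h3
  have h5 := Finset.sum_inter_add_sum_sdiff S S₁ c
  have h6 := Finset.sum_inter_add_sum_sdiff S₁ S c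
  rw [Finset.inter_comm] at h6
  linarith

/-- Rank-one weights, homogeneous stubbornness: picking the `K` largest centralities
maximizes the influencer's social power. -/
theorem rank_one_homogeneous_stubbornness_optimal
    (n : ℕ) (hn : 1 ≤ n) (c : Fin n → ℝ) (hc : ∀ j, 0 < c j) (hc1 : ∑ j, c j = 1)
    (θ : ℝ) (hθ : θ ∈ Set.Ioo (0 : ℝ) 1) (ω : ℝ) (hω : ω ∈ Set.Ioo (0 : ℝ) 1)
    (K : ℕ) (hK : 1 ≤ K) (hKn : K ≤ n)
    (S₁ : Finset (Fin n)) (hcard : S₁.card = K)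
    (htop : ∀ i ∈ S₁, ∀ j ∉ S₁, c j ≤ c i) :
    ∀ S : Finset (Fin n), S.card ≤ K →
      sp0 (rankOne c) (fun _ => θ) ω S ≤ sp0 (rankOne c) (fun _ => θ) ω S₁ := by
  intro S hS
  obtain ⟨x, hx, hsx⟩ := aux_sum_p c hc hc1 θ hθ ω hω S
  obtain ⟨y, hy, hsy⟩ := aux_sum_p c hc hc1 θ hθ ω hω S₁
  have hne : S₁.Nonempty := Finset.card_pos.1 (by omega)
  have hC := aux_top c hc S₁ S hne (by omega) htop
  have hC0 : 0 ≤ ∑ j ∈ S, c j := Finset.sum_nonneg fun j _ => (hc j).le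
  have hk : (S.card : ℝ) ≤ S₁.card := by exact_mod_cast (by omega : S.card ≤ S₁.card)
  have hkn : (S₁.card : ℝ) ≤ n := by exact_mod_cast (by omega : S₁.card ≤ n)
  obtain ⟨hω0, hω1⟩ := hω
  obtain ⟨hθ0, hθ1⟩ := hθ
  rw [sp0, sp0, hsx, hsy]
  have hA : 0 ≤ ω * ∑ j ∈ S, c j := mul_nonneg hω0.le hC0
  have hAB : ω * ∑ j ∈ S, c j ≤ ω * ∑ j ∈ S₁, c j := mul_le_mul_of_nonneg_left hC hω0.le
  generalize ω * ∑ j ∈ S, c j = A at *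
  generalize ω * ∑ j ∈ S₁, c j = B at *
  have ha : 0 < 1 - θ := by linarith
  have dA : 0 < 1 - (1 - θ) * (1 - A) := by nlinarith [mul_nonneg ha.le hA]
  have dB : 0 < 1 - (1 - θ) * (1 - B) := by nlinarith [mul_nonneg ha.le (hA.trans hAB)]
  have hx1 : x ≤ 1 := by
    have : 0 ≤ (1 - x) * (1 - (1 - θ) * (1 - A)) := by linarith
    linarith [nonneg_of_mul_nonneg_left this dA]
  have hxy : x ≤ y := by
    have : 0 ≤ (y - x) * (1 - (1 - θ) * (1 - B)) := by
      have : (y - x) * (1 - (1 - θ) * (1 - B)) = (1 - θ) * ((B - A) * (1 - x)) := by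
        linear_combination hy - hx
      rw [this]
      exact mul_nonneg ha.le (mul_nonneg (by linarith) (by linarith))
    linarith [nonneg_of_mul_nonneg_left this dB]
  have hk0 : (0 : ℝ) ≤ S₁.card := Nat.cast_nonneg _
  have key : n * x + ω * S.card * (1 - x) ≤ n * y + ω * S₁.card * (1 - y) := by
    have e1 : 0 ≤ ω * ((S₁.card - S.card) * (1 - x)) :=
      mul_nonneg hω0.le (mul_nonneg (by linarith) (by linarith))
    have e2 : 0 ≤ (n - ω * S₁.card) * (y - x) :=
      mul_nonneg (by nlinarith) (by linarith)
    linarith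
  have := mul_le_mul_of_nonneg_left key ha.le
  gcongr
end

section
/- Suppose W = 𝟙 cᵀ with uniform centralities c_j = 1/n for all j, let θ_i ∈ [0,1] for all i with Σ_j θ_j > 0, and let ω ∈ (0,1). Fix 1 ≤ K ≤ n and let S₁ ⊆ V be any K-element set consisting of indices of the K smallest stubbornness values, i.e., θ_i ≤ θ_j for every i ∈ S₁ and j ∉ S₁. Then S₁ maximizes the influencer's social power under the budget K: sp₀(S₁) ≥ sp₀(S) for every S ⊆ V with |S| ≤ K. -/
open Matrix Finset

lemma one_sub_H_apply {n : ℕ} (θ : Fin n → ℝ) (ω : ℝ) (S : Finset (Fin n)) (v : Fin n → ℝ)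
    (i : Fin n) :
    ((1 - Hmat (rankOne (fun _ => 1 / (n:ℝ))) θ ω S) *ᵥ v) i
      = v i - (1 - if i ∈ S then ω else 0) * (1 - θ i) * ((∑ j, v j) / n) := by
  have h1 : (rankOne (fun _ : Fin n => 1 / (n:ℝ))) *ᵥ v = fun _ => (∑ j, v j) / n := by
    funext k
    simp only [rankOne, Matrix.mulVec, dotProduct, Matrix.of_apply]
    rw [← Finset.mul_sum]; ring
  rw [Matrix.sub_mulVec, Matrix.one_mulVec, Hmat, ← Matrix.mulVec_mulVec, ← Matrix.mulVec_mulVec,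
    h1]
  simp only [Matrix.sub_mulVec, Matrix.one_mulVec, Pi.sub_apply, Matrix.mulVec_diagonal]
  ring

lemma sum_coef {n : ℕ} (θ : Fin n → ℝ) (ω : ℝ) (S : Finset (Fin n)) :
    ∑ i, (1 - if i ∈ S then ω else 0) * (1 - θ i)
      = n - ∑ i, θ i - ω * ∑ i ∈ S, (1 - θ i) := by
  have : ∀ i, (1 - if i ∈ S then ω else 0) * (1 - θ i)
      = 1 - θ i - ω * (if i ∈ S then (1 - θ i) else 0) := by
    intro i; split_ifs <;> ring
  simp only [this, Finset.sum_sub_distrib, ← Finset.mul_sum]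
  simp

lemma sum_p0 {n : ℕ} (hn : 1 ≤ n) (θ : Fin n → ℝ) (hθ : ∀ i, θ i ∈ Set.Icc (0 : ℝ) 1)
    (hT : 0 < ∑ j, θ j) (ω : ℝ) (hω : 0 < ω) (S : Finset (Fin n)) :
    ∑ i, p0vec (rankOne (fun _ => 1 / (n:ℝ))) θ ω S i
      = n * (ω * ∑ i ∈ S, (1 - θ i)) / (∑ j, θ j + ω * ∑ i ∈ S, (1 - θ i)) := by
  have hn' : (0:ℝ) < n := by exact_mod_cast hn
  have hA : 0 ≤ ∑ i ∈ S, (1 - θ i) :=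
    Finset.sum_nonneg fun i _ => sub_nonneg.2 (hθ i).2
  have hD : 0 < ∑ j, θ j + ω * ∑ i ∈ S, (1 - θ i) := by positivity
  have key : ∀ v : Fin n → ℝ,
      ∑ i, ((1 - Hmat (rankOne (fun _ => 1 / (n:ℝ))) θ ω S) *ᵥ v) i
        = (∑ j, v j) / n * (∑ j, θ j + ω * ∑ i ∈ S, (1 - θ i)) := by
    intro v
    simp only [one_sub_H_apply]
    rw [Finset.sum_sub_distrib, ← Finset.sum_mul, sum_coef]
    field_simp
    ring
  have hdet : IsUnit (1 - Hmat (rankOne (fun _ => 1 / (n:ℝ))) θ ω S).det := by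
    rw [isUnit_iff_ne_zero]
    intro h0
    obtain ⟨v, hv, hv0⟩ := Matrix.exists_mulVec_eq_zero_iff.2 h0
    have k := key v
    rw [hv0] at k
    have hs : (∑ j, v j) / n = 0 := by
      simp only [Pi.zero_apply, Finset.sum_const_zero] at k
      rcases mul_eq_zero.1 k.symm with h | h
      · exact h
      · exact absurd h hD.ne'
    apply hv
    funext i
    have := one_sub_H_apply θ ω S v i
    rw [hv0, hs] at this
    simpa using this.symm
  have k := key (p0vec (rankOne (fun _ => 1 / (n:ℝ))) θ ω S)
  have e : (1 - Hmat (rankOne (fun _ => 1 / (n:ℝ))) θ ω S) *ᵥ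
      (p0vec (rankOne (fun _ => 1 / (n:ℝ))) θ ω S)
      = fun i => ω * if i ∈ S then (1 - θ i) else 0 := by
    rw [p0vec, Matrix.mulVec_mulVec, ← Matrix.mul_assoc, Matrix.mul_nonsing_inv _ hdet,
      Matrix.one_mul]
    funext i
    simp only [Matrix.sub_mulVec, Matrix.one_mulVec, Pi.sub_apply, Matrix.mulVec_diagonal]
    split_ifs <;> ring
  rw [e, ← Finset.mul_sum] at k
  simp only [Finset.sum_ite_mem, Finset.univ_inter] at k
  rw [eq_div_iff hD.ne']
  rw [div_mul_eq_mul_div, eq_div_iff hn'.ne'] at k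
  linarith

lemma sum_best {n : ℕ} (θ : Fin n → ℝ) (hθ : ∀ i, θ i ∈ Set.Icc (0 : ℝ) 1)
    (S₁ S : Finset (Fin n)) (hbot : ∀ i ∈ S₁, ∀ j ∉ S₁, θ i ≤ θ j) (hc : S.card ≤ S₁.card) :
    ∑ i ∈ S, (1 - θ i) ≤ ∑ i ∈ S₁, (1 - θ i) := by
  have hc' : (S \ S₁).card ≤ (S₁ \ S).card := by
    have := Finset.card_sdiff_add_card_inter S S₁
    have := Finset.card_sdiff_add_card_inter S₁ S
    rw [Finset.inter_comm] at this
    omega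
  have e1 := Finset.sum_inter_add_sum_sdiff S S₁ (fun i => 1 - θ i)
  have e2 := Finset.sum_inter_add_sum_sdiff S₁ S (fun i => 1 - θ i)
  rw [Finset.inter_comm] at e2
  suffices h : ∑ i ∈ S \ S₁, (1 - θ i) ≤ ∑ i ∈ S₁ \ S, (1 - θ i) by linarith
  obtain ⟨U, hU, hUc⟩ := Finset.exists_subset_card_eq hc'
  refine le_trans ?_ (Finset.sum_le_sum_of_subset_of_nonneg hU
    fun i _ _ => sub_nonneg.2 (hθ i).2)
  let f := Finset.equivOfCardEq hUc
  rw [← Finset.sum_coe_sort (S \ S₁), ← Finset.sum_coe_sort U]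
  refine le_of_eq_of_le (f.sum_comp _).symm ?_
  refine Finset.sum_le_sum fun i _ => ?_
  have h1 := (Finset.mem_sdiff.1 (hU i.2)).1
  have h2 := (Finset.mem_sdiff.1 (f i).2).2
  have := hbot _ h1 _ h2
  linarith

/-- Rank-one weights with uniform centralities: picking the `K` least stubborn agents
maximizes the influencer's social power. -/
theorem rank_one_uniform_centrality_optimal
    (n : ℕ) (hn : 1 ≤ n)
    (θ : Fin n → ℝ) (hθ : ∀ i, θ i ∈ Set.Icc (0 : ℝ) 1) (hθsum : 0 < ∑ j, θ j)
    (ω : ℝ) (hω : ω ∈ Set.Ioo (0 : ℝ) 1)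
    (K : ℕ) (hK : 1 ≤ K) (hKn : K ≤ n)
    (S₁ : Finset (Fin n)) (hcard : S₁.card = K)
    (hbot : ∀ i ∈ S₁, ∀ j ∉ S₁, θ i ≤ θ j) :
    ∀ S : Finset (Fin n), S.card ≤ K →
      sp0 (rankOne (fun _ => 1 / n)) θ ω S ≤ sp0 (rankOne (fun _ => 1 / n)) θ ω S₁ := by
  intro S hS
  have hT := hθsum
  unfold sp0
  rw [sum_p0 hn θ hθ hT ω hω.1, sum_p0 hn θ hθ hT ω hω.1]
  have hA : 0 ≤ ∑ i ∈ S, (1 - θ i) :=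
    Finset.sum_nonneg fun i _ => sub_nonneg.2 (hθ i).2
  have hB := sum_best θ hθ S₁ S hbot (hcard ▸ hS)
  have hω0 := hω.1
  have hB' := mul_le_mul_of_nonneg_left hB hω0.le
  have hA' := mul_nonneg hω0.le hA
  gcongr ?_ / _
  gcongr ?_ + _
  rw [div_le_div_iff₀ (by linarith) (by linarith)]
  have hn' : (0:ℝ) ≤ n := Nat.cast_nonneg n
  have := mul_le_mul_of_nonneg_left hB' (mul_nonneg hn' hT.le)
  nlinarith [this]
end

section
/- Let n = 2s − 1 with s ≥ 2, and let W = C(w₀, w₁, …, w_{s−1}, w_{s−1}, …, w₁) be the symmetric circulant weight matrix of a ring graph, where w₀ ≥ w₁ ≥ … ≥ w_{s−1} ≥ 0, w₀ > 0, w₁ > w_{s−1}, and w₀ + 2 Σ_{ℓ=1}^{s−1} w_ℓ = 1. Assume homogeneous stubbornness θ_i = θ ∈ (0,1) for all i ∈ V and ω ∈ (0,1). Let M = I − (1 − θ) W, so M is invertible and M^{-1} = C(m₀, m₁, …, m_{n−1}) is a symmetric circulant matrix. Then m₀ > m₁ > … > m_{s−1}, and consequently {1, s} maximizes the influencer's social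 power under budget K = 2: sp₀({1, s}) ≥ sp₀(S) for every S ⊆ V with |S| ≤ 2, with sp₀({1, s+1}) = sp₀({1, s}). -/
open Matrix Finset

/-- The circulant matrix `C(m₀,…,m_{n-1})` whose `(i,j)` entry is `m_{(j-i) mod n}`. -/
def Cmat {n : ℕ} (m : Fin n → ℝ) : Matrix (Fin n) (Fin n) ℝ :=
  Matrix.of fun i j => m (j - i)

/-- `M = I - (1-θ) W` for a circulant weight generator `w`. -/
noncomputable def Mring (n : ℕ) (θ : ℝ) (w : Fin n → ℝ) : Matrix (Fin n) (Fin n) ℝ :=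
  1 - (1 - θ) • Cmat w

/-- Generator of the symmetric circulant matrix `C(w₀,…,w_{s-1},…)` of a ring graph:
the entry at circular position `k` is `w_{min(k, n-k)}`. -/
def ringGen (n : ℕ) (w : ℕ → ℝ) : Fin n → ℝ :=
  fun k => w (min k.val (n - k.val))

lemma rg_abel (w : ℕ → ℝ) (P f : ℕ → ℝ) (h0 : P 0 = f 0) (hP : ∀ d, P (d+1) = P d + f (d+1)) (t : ℕ) :
    w 0 * f 0 + ∑ d ∈ Finset.Icc 1 t, w d * f d
      = ∑ d ∈ Finset.range t, (w d - w (d+1)) * P d + w t * P t := by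
  induction t with
  | zero => simp [h0]
  | succ t ih =>
    rw [Finset.sum_Icc_succ_top (by omega), Finset.sum_range_succ, hP]
    linear_combination ih

lemma rg_fold (r : ℕ) (m : ℤ → ℝ) (even : ∀ j, m (-j) = m j)
    (per : ∀ j, m (j + (2*r+1)) = m j) (k d : ℕ) (hk : k < r) (hd : d < r) :
    ∃ lo hi : ℕ, m (k - d) - m (k + d + 1) = m lo - m hi ∧ lo < hi ∧ hi ≤ r ∧ hi ≤ lo + (2*d+1) ∧
      (1 ≤ k → 1 ≤ d → lo + 2 ≤ hi) ∧ lo = (k-d) + (d-k) := by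
  refine ⟨(k-d)+(d-k), min (k+d+1) (2*r-k-d), ?_, by omega, by omega, by omega, by omega, rfl⟩
  have e1 : m (k - d) = m (((k-d)+(d-k) : ℕ) : ℤ) := by
    rcases le_total d k with h | h
    · congr 1; omega
    · rw [← even]; congr 1; omega
  have e2 : m (k + d + 1) = m ((min (k+d+1) (2*r-k-d) : ℕ) : ℤ) := by
    rcases le_total (k+d+1) (2*r-k-d) with h | h
    · congr 1; omega
    · rw [← even, ← per]; congr 1; omega
  rw [e1, e2]

lemma rg_key (r : ℕ) (hr : 1 ≤ r) (w : ℕ → ℝ)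
    (hmono : ∀ ℓ : ℕ, ℓ + 1 ≤ r → w (ℓ + 1) ≤ w ℓ)
    (hlast : 0 ≤ w r) (h1 : w r < w 1)
    (hsum : w 0 + 2 * ∑ ℓ ∈ Finset.Icc 1 r, w ℓ = 1)
    (a : ℝ) (ha : 0 < a) (ha1 : a < 1)
    (m : ℤ → ℝ) (even : ∀ j, m (-j) = m j)
    (per : ∀ j, m (j + (2*r+1)) = m j)
    (eq : ∀ k : ℕ, k ≤ r → m k - a * (w 0 * m k + ∑ d ∈ Finset.Icc 1 r, w d * (m (k+d) + m (k-d)))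
      = if k = 0 then 1 else 0) :
    (∀ k : ℕ, k < r → m (k+1 : ℕ) < m k) := by
  set g : ℕ → ℝ := fun k => m k - m (k+1 : ℕ) with hg
  have hc : ∀ d ∈ Finset.range r, 0 ≤ w d - w (d+1) := by
    intro d hd
    have := hmono d (by simpa using hd)
    linarith
  have grec : ∀ k : ℕ, k < r → g k = (if k = 0 then 1 else 0) +
      a * ∑ d ∈ Finset.range r, (w d - w (d+1)) * (m (k - d) - m (k + d + 1)) := by
    intro k hk
    have A := rg_abel w (fun d => m (k - d) - m (k + d + 1))
      (fun d => if d = 0 then m k - m (k+1) else m (k+d) + m (k-d) - m (k+1+d) - m (k+1-d))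
      (by simp) (by
        intro d
        simp only [Nat.succ_ne_zero, if_false]
        push_cast
        rw [show (k:ℤ) + (d+1) = k + d + 1 by ring, show (k:ℤ) + 1 + (d+1) = k + d + 1 + 1 by ring,
          show (k:ℤ) + 1 - (d+1) = k - d by ring]
        ring) r
    have z : m ((k:ℤ) - r) - m (k + r + 1) = 0 := by
      rw [← per (k - r), sub_eq_zero]; congr 1; ring
    have e1 := eq k hk.le
    have e2 := eq (k+1) hk
    simp only [Nat.succ_ne_zero, if_false] at e2
    push_cast at e2
    have S : ∑ d ∈ Finset.Icc 1 r, w d * (if d = 0 then m k - m (k+1) else m (k+d) + m (k-d) - m (k+1+d) - m (k+1-d))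
       = ∑ d ∈ Finset.Icc 1 r, w d * (m (k+d) + m (k-d)) - ∑ d ∈ Finset.Icc 1 r, w d * (m (k+1+d) + m (k+1-d)) := by
      rw [← Finset.sum_sub_distrib]
      refine Finset.sum_congr rfl fun d hd => ?_
      rw [if_neg (by simp at hd; omega)]; ring
    simp only [if_true] at A
    rw [S, z] at A
    simp only [hg]
    push_cast
    linear_combination e1 - e2 + a * A
  have tele : ∀ (μ : ℝ), (∀ k, k < r → μ ≤ g k) → ∀ t lo : ℕ, lo + t ≤ r →
      t * μ ≤ m lo - m (lo + t : ℕ) := by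
    intro μ hμ t
    induction t with
    | zero => intro lo _; simp
    | succ t ih =>
      intro lo h
      have h1 := ih lo (by omega)
      have h2 := hμ (lo+t) (by omega)
      simp only [hg] at h2
      rw [show lo + (t+1) = lo + t + 1 by ring]
      push_cast at *
      linarith
  have csum : ∑ d ∈ Finset.range r, (w d - w (d+1)) * (2*d+1) ≤ 1 := by
    have A := rg_abel w (fun d => 2*d+1) (fun d => if d = 0 then 1 else 2) (by simp)
      (by intro d; simp; ring) r
    have S : ∑ d ∈ Finset.Icc 1 r, w d * (if d = 0 then (1:ℝ) else 2) = 2 * ∑ d ∈ Finset.Icc 1 r, w d := by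
      rw [Finset.mul_sum]
      refine Finset.sum_congr rfl fun d hd => ?_
      rw [if_neg (by simp at hd; omega)]; ring
    rw [S] at A
    simp only [if_true] at A
    have : 0 ≤ w r * (2 * r + 1) := by positivity
    linarith
  have gnn : ∀ k, k < r → 0 ≤ g k := by
    obtain ⟨k0, hk0, hmin⟩ := Finset.exists_min_image (Finset.range r) g ⟨0, by rw [Finset.mem_range]; omega⟩
    simp only [Finset.mem_range] at hk0 hmin
    suffices 0 ≤ g k0 from fun k hk => this.trans (hmin k hk)
    by_contra hneg
    push Not at hneg
    have B : ∑ d ∈ Finset.range r, (w d - w (d+1)) * (2*d+1) * g k0 ≤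
        ∑ d ∈ Finset.range r, (w d - w (d+1)) * (m (k0 - d) - m (k0 + d + 1)) := by
      refine Finset.sum_le_sum fun d hd => ?_
      rw [mul_assoc]
      refine mul_le_mul_of_nonneg_left ?_ (hc d hd)
      obtain ⟨lo, hi, e, h1, h2, h3, -, -⟩ := rg_fold r m even per k0 d hk0 (by simpa using hd)
      have := tele (g k0) hmin (hi - lo) lo (by omega)
      rw [show lo + (hi - lo) = hi by omega] at this
      rw [e]
      refine le_trans ?_ this
      refine mul_le_mul_of_nonpos_right ?_ hneg.le
      have : ((hi - lo : ℕ) : ℝ) ≤ ((2*d+1 : ℕ) : ℝ) := by exact_mod_cast (by omega)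
      simpa using this
    rw [← Finset.sum_mul] at B
    have e := grec k0 hk0
    have : (0:ℝ) ≤ if k0 = 0 then 1 else 0 := by split_ifs <;> norm_num
    have B2 : g k0 ≤ ∑ d ∈ Finset.range r, (w d - w (d+1)) * (m (k0 - d) - m (k0 + d + 1)) := by
      nlinarith
    nlinarith
  have anti : ∀ lo hi : ℕ, lo ≤ hi → hi ≤ r → m hi ≤ m lo := by
    intro lo hi h1 h2
    have := tele 0 gnn (hi - lo) lo (by omega)
    rw [show lo + (hi - lo) = hi by omega] at this
    simp at this
    exact this
  have Pnn : ∀ k, k < r → ∀ d ∈ Finset.range r, 0 ≤ (w d - w (d+1)) * (m (k - d) - m (k + d + 1)) := by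
    intro k hk d hd
    refine mul_nonneg (hc d hd) ?_
    obtain ⟨lo, hi, e, h1, h2, h3, -, -⟩ := rg_fold r m even per k d hk (by simpa using hd)
    rw [e]
    linarith [anti lo hi h1.le h2]
  obtain ⟨d, hd1, hdr, hcd⟩ : ∃ d, 1 ≤ d ∧ d < r ∧ 0 < w d - w (d+1) := by
    by_contra hno
    push Not at hno
    have : ∀ t, 1 ≤ t → t ≤ r → w 1 ≤ w t := by
      intro t ht
      induction t, ht using Nat.le_induction with
      | base => intro _; rfl
      | succ t ht ih => intro h; linarith [ih (by omega), hno t ht (by omega)]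
    linarith [this r hr le_rfl]
  have g0 : g 0 ≠ 0 := by
    have := grec 0 (by omega)
    have h := Finset.sum_nonneg (Pnn 0 (by omega))
    rw [this, if_pos rfl]
    have := mul_nonneg ha.le h
    exact ne_of_gt (by linarith)
  have prop : ∀ k, k < r → 1 ≤ k → g k = 0 →
      g ((k-d)+(d-k)) = 0 ∧ g ((k-d)+(d-k)+1) = 0 ∧ (k-d)+(d-k) + 2 ≤ r := by
    intro k hk hk1 hz
    have e := grec k hk
    rw [hz, if_neg (by omega)] at e
    have z : ∑ d ∈ Finset.range r, (w d - w (d+1)) * (m (k - d) - m (k + d + 1)) = 0 := by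
      rw [zero_add] at e
      exact (mul_eq_zero.1 e.symm).resolve_left ha.ne'
    have z2 := (Finset.sum_eq_zero_iff_of_nonneg (Pnn k hk)).1 z d (by simpa using hdr)
    have z3 := (mul_eq_zero.1 z2).resolve_left hcd.ne'
    obtain ⟨lo, hi, e, h1, h2, h3, h4, h5⟩ := rg_fold r m even per k d hk hdr
    have h4 := h4 hk1 hd1
    rw [e] at z3
    rw [← h5]
    have a1 := anti lo (lo+1) (by omega) (by omega)
    have a2 := anti (lo+1) (lo+2) (by omega) (by omega)
    have a3 := anti (lo+2) hi (by omega) (by omega)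
    refine ⟨?_, ?_, by omega⟩ <;> simp only [hg] <;> 
      [skip; rw [show lo + 1 + 1 = lo + 2 by ring]] <;> linarith
  have gne : ∀ k, k < r → g k ≠ 0 := by
    intro k
    induction k using Nat.strong_induction_on with
    | _ k ih =>
      intro hk hz
      rcases Nat.eq_zero_or_pos k with rfl | hk1
      · exact g0 hz
      obtain ⟨p1, p2, p3⟩ := prop k hk hk1 hz
      rcases le_or_gt d k with h | h
      · exact ih _ (by omega) (by omega) p1
      · obtain ⟨q1, -, -⟩ := prop _ (by omega) (by omega) p2
        exact ih _ (by omega) (by omega) q1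
  intro k hk
  have := lt_of_le_of_ne (gnn k hk) (gne k hk).symm
  simp only [hg] at this
  linarith

lemma rg_dom {n : ℕ} (W : Matrix (Fin n) (Fin n) ℝ) (hW : ∀ i j, 0 ≤ W i j)
    (hrow : ∀ i, ∑ j, W i j = 1) (D : Fin n → ℝ) (hD0 : ∀ i, 0 ≤ D i) (hD1 : ∀ i, D i < 1) :
    IsUnit (1 - Matrix.diagonal D * W) := by
  rw [Matrix.isUnit_iff_isUnit_det, isUnit_iff_ne_zero]
  refine det_ne_zero_of_sum_row_lt_diag fun k => ?_
  have e : ∀ j ∈ Finset.univ.erase k, ‖(1 - Matrix.diagonal D * W) k j‖ = D k * W k j := by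
    intro j hj
    have : k ≠ j := fun h => by simp [h] at hj
    rw [Matrix.sub_apply, Matrix.one_apply_ne this, Matrix.diagonal_mul, zero_sub, norm_neg,
      Real.norm_of_nonneg (mul_nonneg (hD0 k) (hW k j))]
  rw [Finset.sum_congr rfl e, ← Finset.mul_sum]
  have h := Finset.add_sum_erase Finset.univ (fun j => W k j) (Finset.mem_univ k)
  rw [hrow] at h
  rw [Matrix.sub_apply, Matrix.one_apply_eq, Matrix.diagonal_mul]
  refine lt_of_lt_of_le ?_ (Real.le_norm_self _)
  have := hD1 k
  nlinarith

lemma rg_sumN (r : ℕ) (G : ℕ → ℝ) :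
    ∑ i ∈ Finset.range (2*r+1), G i = G 0 + ∑ d ∈ Finset.Icc 1 r, (G d + G (2*r+1-d)) := by
  rw [Finset.sum_range_succ', show 2 * r = r + r by ring, Finset.sum_range_add, add_comm,
    ← Finset.sum_range_reflect (fun x => G (r + x + 1)) r,
    Finset.sum_add_distrib, ← Finset.Ico_succ_right_eq_Icc, Finset.sum_Ico_eq_sum_range,
    Finset.sum_Ico_eq_sum_range]
  simp only [Nat.succ_eq_succ, Nat.succ_eq_add_one, Nat.add_sub_cancel]
  congr 2
  · refine Finset.sum_congr rfl fun x hx => ?_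
    congr 1; omega
  · refine Finset.sum_congr rfl fun x hx => ?_
    have hx := Finset.mem_range.1 hx
    congr 1
    omega

open Fin.CommRing in
lemma rg_sum (r : ℕ) (F : Fin (2*r+1) → ℝ) :
    ∑ i, F i = F 0 + ∑ d ∈ Finset.Icc 1 r, (F ((d:ℤ) : Fin (2*r+1)) + F ((-(d:ℤ) : ℤ) : Fin (2*r+1))) := by
  have hn : ((2*r+1 : ℕ) : Fin (2*r+1)) = 0 := by simp
  have e : ∀ i : Fin (2*r+1), F i = (fun k : ℕ => F (k : Fin (2*r+1))) i := by
    intro i; simp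
  rw [Finset.sum_congr rfl (fun i _ => e i), Fin.sum_univ_eq_sum_range (fun k : ℕ => F (k : Fin (2*r+1))),
    rg_sumN]
  congr 1
  refine Finset.sum_congr rfl fun x hx => ?_
  have hx := Finset.mem_Icc.1 hx
  have : ((2*r+1-x : ℕ) : Fin (2*r+1)) + (x : Fin (2*r+1)) = 0 := by
    rw [← Nat.cast_add, ← hn]; congr 1; omega
  rw [Int.cast_neg, Int.cast_natCast, ← eq_neg_of_add_eq_zero_left this]

open Fin.CommRing in
lemma rg_gen (r d : ℕ) (hd : d ≤ r) (w : ℕ → ℝ) : ringGen (2*r+1) w ((d:ℤ) : Fin (2*r+1)) = w d := by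
  simp only [ringGen, Int.cast_natCast, Fin.val_natCast]
  rw [Nat.mod_eq_of_lt (by omega)]; congr 1; omega

open Fin.CommRing in
lemma rg_gen_neg (r : ℕ) (w : ℕ → ℝ) (i : Fin (2*r+1)) : ringGen (2*r+1) w (-i) = ringGen (2*r+1) w i := by
  simp only [ringGen, Fin.val_neg]
  split_ifs with h
  · simp [h]
  · congr 1; have := i.2; omega

/-- the p0 sum for a set with constant coefficient -/
lemma rg_p0 {n : ℕ} (W : Matrix (Fin n) (Fin n) ℝ) (hW : ∀ i j, 0 ≤ W i j)
    (hrow : ∀ i, ∑ j, W i j = 1) (hsym : Wᵀ = W) (θ : ℝ) (hθ : θ ∈ Set.Ioo (0 : ℝ) 1) (ω : ℝ)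
    (hω : ω ∈ Set.Ioo (0 : ℝ) 1) (B : Matrix (Fin n) (Fin n) ℝ) (hB : (1 - (1-θ) • W) * B = 1)
    (S : Finset (Fin n)) (c : ℝ)
    (hc : ∀ i ∈ S, (1 - ω) * c + ω * (c * ∑ j ∈ S, B i j) = (1 - θ) * ω) :
    ∑ i, p0vec W (fun _ => θ) ω S i = S.card * c / θ := by
  obtain ⟨ht0, ht1⟩ := hθ
  obtain ⟨ho0, ho1⟩ := hω
  set D : Fin n → ℝ := fun i => (1 - if i ∈ S then ω else 0) * (1 - θ) with hD
  have hH : Hmat W (fun _ => θ) ω S = Matrix.diagonal D * W := by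
    ext i j
    simp only [Hmat, ← Matrix.mul_assoc]
    rw [← Matrix.diagonal_one, Matrix.diagonal_sub, Matrix.diagonal_sub, Matrix.diagonal_mul_diagonal]
  have hu : IsUnit (1 - Hmat W (fun _ => θ) ω S) := by
    rw [hH]
    refine rg_dom W hW hrow D ?_ ?_ <;> intro i <;> simp only [hD] <;> split_ifs <;> nlinarith
  set y : Fin n → ℝ := fun j => if j ∈ S then c else 0 with hy
  have hMx : (1 - (1-θ) • W).mulVec (B.mulVec y) = y := by
    rw [Matrix.mulVec_mulVec, hB, Matrix.one_mulVec]
  have hBy : ∀ i, B.mulVec y i = c * ∑ j ∈ S, B i j := by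
    intro i
    simp only [Matrix.mulVec, dotProduct, hy, mul_ite, mul_zero]
    rw [Finset.sum_ite_mem, Finset.univ_inter, Finset.mul_sum]
    exact Finset.sum_congr rfl fun _ _ => mul_comm _ _
  have hx : p0vec W (fun _ => θ) ω S = B.mulVec y := by
    have key : (1 - Hmat W (fun _ => θ) ω S).mulVec (B.mulVec y)
        = (1 - Matrix.diagonal (fun _ : Fin n => θ)).mulVec (fun j => if j ∈ S then ω else 0) := by
      funext i
      have hi := congrFun hMx i
      rw [Matrix.sub_mulVec, Matrix.one_mulVec, Matrix.smul_mulVec] at hi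
      simp only [Pi.sub_apply, Pi.smul_apply, smul_eq_mul] at hi
      rw [hH, Matrix.sub_mulVec, Matrix.one_mulVec, ← Matrix.mulVec_mulVec, Matrix.sub_mulVec, Matrix.one_mulVec]
      simp only [Pi.sub_apply, Matrix.mulVec_diagonal, hD]
      by_cases hS : i ∈ S
      · have := hc i hS
        rw [← hBy] at this
        simp only [hy, hS, if_true] at hi this ⊢
        linear_combination (1 - ω) * hi + this
      · simp only [hy, hS, if_false] at hi ⊢
        linear_combination hi
    rw [p0vec, ← Matrix.mulVec_mulVec, ← key, Matrix.mulVec_mulVec,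
      Matrix.nonsing_inv_mul _ ((Matrix.isUnit_iff_isUnit_det _).1 hu), Matrix.one_mulVec]
  rw [hx]
  have hs : ∑ i, (1 - (1-θ) • W).mulVec (B.mulVec y) i = θ * ∑ i, B.mulVec y i := by
    have e : ∑ i, W.mulVec (B.mulVec y) i = ∑ i, B.mulVec y i := by
      generalize B.mulVec y = x
      simp only [Matrix.mulVec, dotProduct]
      rw [Finset.sum_comm]
      refine Finset.sum_congr rfl fun j _ => ?_
      rw [← Finset.sum_mul]
      have : ∑ i, W i j = 1 := by
        rw [← hrow j]; exact Finset.sum_congr rfl fun i _ => congrFun (congrFun hsym j) i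
      rw [this, one_mul]
    rw [Matrix.sub_mulVec, Matrix.one_mulVec, Matrix.smul_mulVec]
    simp only [Pi.sub_apply, Pi.smul_apply, smul_eq_mul]
    rw [Finset.sum_sub_distrib, ← Finset.mul_sum, e]; ring
  rw [hMx] at hs
  have : ∑ i, y i = S.card * c := by
    simp [hy]
  rw [this] at hs
  rw [hs]; field_simp

open Fin.CommRing in
lemma rg_main (r : ℕ) (hr : 1 ≤ r) (w : ℕ → ℝ)
    (hmono : ∀ ℓ : ℕ, ℓ + 1 ≤ r → w (ℓ + 1) ≤ w ℓ)
    (hlast : 0 ≤ w r) (h1 : w r < w 1)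
    (hsum : w 0 + 2 * ∑ ℓ ∈ Finset.Icc 1 r, w ℓ = 1)
    (θ : ℝ) (hθ : θ ∈ Set.Ioo (0 : ℝ) 1) (ω : ℝ) (hω : ω ∈ Set.Ioo (0 : ℝ) 1) :
    IsUnit (Mring (2*r+1) θ (ringGen (2*r+1) w)) ∧
    (Mring (2*r+1) θ (ringGen (2*r+1) w))⁻¹ =
      Cmat (fun k => (Mring (2*r+1) θ (ringGen (2*r+1) w))⁻¹ 0 k) ∧
    (∀ k : ℕ, k < r →
      (Mring (2*r+1) θ (ringGen (2*r+1) w))⁻¹ 0 ((k+1 : ℕ) : Fin (2*r+1))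
        < (Mring (2*r+1) θ (ringGen (2*r+1) w))⁻¹ 0 (k : Fin (2*r+1))) ∧
    (∀ S : Finset (Fin (2*r+1)), S.card ≤ 2 →
      sp0 (Cmat (ringGen (2*r+1) w)) (fun _ => θ) ω S
        ≤ sp0 (Cmat (ringGen (2*r+1) w)) (fun _ => θ) ω {0, (r : Fin (2*r+1))}) ∧
    sp0 (Cmat (ringGen (2*r+1) w)) (fun _ => θ) ω {0, ((r+1 : ℕ) : Fin (2*r+1))}
      = sp0 (Cmat (ringGen (2*r+1) w)) (fun _ => θ) ω {0, (r : Fin (2*r+1))} := by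
  have ht0 := hθ.1
  have ht1 := hθ.2
  have ho0 := hω.1
  have ho1 := hω.2
  set f := ringGen (2*r+1) w with hf
  set W : Matrix (Fin (2*r+1)) (Fin (2*r+1)) ℝ := Cmat f with hWd
  have Wap : ∀ i j, W i j = f (j - i) := fun i j => rfl
  have hn0 : ((2*r+1 : ℕ) : Fin (2*r+1)) = 0 := by simp
  have wnn : ∀ ℓ, ℓ ≤ r → 0 ≤ w ℓ := by
    intro ℓ hℓ
    induction hℓ using Nat.decreasingInduction with
    | self => exact hlast
    | of_succ k hk ih => exact ih.trans (hmono k hk)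
  have hW : ∀ i j, 0 ≤ W i j := by
    intro i j
    rw [Wap]
    exact wnn _ (by omega)
  have fneg : ∀ i, f (-i) = f i := rg_gen_neg r w
  have fd : ∀ d, d ≤ r → f ((d:ℤ) : Fin (2*r+1)) = w d := fun d hd => rg_gen r d hd w
  have f0 : f 0 = w 0 := by simpa using fd 0 (by omega)
  have fsum : ∑ i, f i = 1 := by
    rw [rg_sum, ← hsum, f0, Finset.mul_sum]
    congr 1
    refine Finset.sum_congr rfl fun d hd => ?_
    have hd := Finset.mem_Icc.1 hd
    rw [Int.cast_neg, fneg, fd d hd.2]; ring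
  have hrow : ∀ i, ∑ j, W i j = 1 := by
    intro i
    rw [← fsum]
    exact (Equiv.subRight i).sum_comp f
  have hsym : Wᵀ = W := by
    ext i j
    rw [Matrix.transpose_apply, Wap, Wap, ← fneg, neg_sub]
  set M := Mring (2*r+1) θ f with hM
  have hMdef : M = 1 - (1-θ) • W := rfl
  have hu : IsUnit M := by
    have := rg_dom W hW hrow (fun _ => 1-θ) (fun _ => by linarith) (fun _ => by linarith)
    rwa [← Matrix.smul_eq_diagonal_mul] at this
  have hud := (Matrix.isUnit_iff_isUnit_det _).1 hu
  set B := M⁻¹ with hBd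
  have hMB : M * B = 1 := Matrix.mul_nonsing_inv _ hud
  have Bsym : ∀ i j, B i j = B j i := by
    have : Bᵀ = B := by
      rw [hBd, Matrix.transpose_nonsing_inv, hMdef, Matrix.transpose_sub, Matrix.transpose_smul, hsym,
        Matrix.transpose_one]
    intro i j
    exact congrFun (congrFun this j) i
  have Bsh : ∀ c i j, B (i + c) (j + c) = B i j := by
    intro c i j
    have : M.submatrix (Equiv.addRight c) (Equiv.addRight c) = M := by
      ext i j
      simp only [hMdef, Matrix.submatrix_apply, Matrix.sub_apply, Matrix.smul_apply, Wap,
        Equiv.coe_addRight, add_sub_add_right_eq_sub, Matrix.one_apply, add_left_inj]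
    have h2 := Matrix.inv_submatrix_equiv M (Equiv.addRight c) (Equiv.addRight c)
    rw [this] at h2
    exact (congrFun (congrFun h2 i) j).symm
  have Bc : ∀ i j, B i j = B 0 (j - i) := by
    intro i j
    rw [← Bsh i 0 (j - i)]; simp
  have Bneg : ∀ i, B 0 (-i) = B 0 i := by
    intro i
    rw [Bsym 0 i, Bc i 0, zero_sub]
  set m : ℤ → ℝ := fun j => B 0 (j : Fin (2*r+1)) with hm
  have meven : ∀ j, m (-j) = m j := by
    intro j; simp only [hm, Int.cast_neg, Bneg]
  have mper : ∀ j, m (j + (2*r+1)) = m j := by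
    intro j
    simp only [hm]
    congr 1
    have : (((2*r+1 : ℕ) : ℤ) : Fin (2*r+1)) = 0 := by rw [Int.cast_natCast, hn0]
    rw [show (2*(r:ℤ)+1) = ((2*r+1 : ℕ) : ℤ) by push_cast; ring, Int.cast_add, this, add_zero]
  have meq : ∀ k : ℕ, k ≤ r → m k - (1-θ) * (w 0 * m k + ∑ d ∈ Finset.Icc 1 r, w d * (m (k+d) + m (k-d)))
      = if k = 0 then 1 else 0 := by
    intro k hk
    have e := congrFun (congrFun hMB ((k:ℤ) : Fin (2*r+1))) 0
    rw [hMdef, Matrix.sub_mul, Matrix.one_mul, Matrix.smul_mul, Matrix.sub_apply, Matrix.smul_apply,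
      Matrix.mul_apply, Bsym, smul_eq_mul, Matrix.one_apply] at e
    have i1 : (((k:ℤ) : Fin (2*r+1)) = 0) ↔ k = 0 := by
      rw [Int.cast_natCast, Fin.natCast_eq_zero]
      constructor
      · intro h; exact Nat.eq_zero_of_dvd_of_lt h (by omega)
      · rintro rfl; simp
    simp only [i1] at e
    rw [← e]
    simp only [hm]
    congr 2
    rw [← Equiv.sum_comp (Equiv.addRight ((k:ℤ) : Fin (2*r+1))), rg_sum]
    simp only [Equiv.coe_addRight, Wap, add_sub_cancel_right, zero_add]
    congr 1
    · rw [sub_self, f0, Bsym]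
    · refine Finset.sum_congr rfl fun d hd => ?_
      have hd := Finset.mem_Icc.1 hd
      rw [Int.cast_neg, fneg, fd d hd.2, Bsym _ 0, Bsym _ 0, mul_add, add_comm ((k:ℤ)) d, Int.cast_add,
        Int.cast_sub, neg_add_eq_sub]
  have mdec := rg_key r hr w hmono hlast h1 hsum (1-θ) (by linarith) (by linarith) m meven mper meq
  have mle : ∀ i j : ℕ, i ≤ j → j ≤ r → m j ≤ m i := by
    intro i j hij
    induction j, hij using Nat.le_induction with
    | base => intro _; rfl
    | succ t ht ih => intro h; exact (mdec t h).le.trans (ih (by omega))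
  have mcirc : ∀ x : Fin (2*r+1), ∃ k : ℕ, k ≤ r ∧ B 0 x = m k := by
    intro x
    have hx := x.2
    rcases le_or_gt x.val r with h | h
    · exact ⟨x.val, h, by simp [hm]⟩
    · refine ⟨2*r+1-x.val, by omega, ?_⟩
      have : ((2*r+1-x.val : ℕ) : Fin (2*r+1)) + x = 0 := by
        conv_lhs => rw [← Fin.cast_val_eq_self x]
        rw [Fin.cast_val_eq_self x, ← hn0]
        nth_rw 2 [← Fin.cast_val_eq_self x]
        rw [← Nat.cast_add]; congr 1; omega
      simp only [hm, Int.cast_natCast]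
      rw [eq_neg_of_add_eq_zero_left this, Bneg]
  have mlow : ∀ x, m r ≤ B 0 x := by
    intro x; obtain ⟨k, hk, e⟩ := mcirc x; rw [e]; exact mle k r hk le_rfl
  have mhigh : ∀ x, B 0 x ≤ m 0 := by
    intro x; obtain ⟨k, hk, e⟩ := mcirc x; rw [e]; exact_mod_cast mle 0 k (by omega) hk
  have mr0 : 0 ≤ m r := by
    have e := meq r le_rfl
    rw [if_neg (by omega)] at e
    have : ∑ d ∈ Finset.Icc 1 r, w d * (2 * m r) ≤ ∑ d ∈ Finset.Icc 1 r, w d * (m (r+d) + m (r-d)) := by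
      refine Finset.sum_le_sum fun d hd => ?_
      have hd := Finset.mem_Icc.1 hd
      refine mul_le_mul_of_nonneg_left ?_ (wnn d hd.2)
      have := mlow ((r+d : ℤ) : Fin (2*r+1))
      have := mlow ((r-d : ℤ) : Fin (2*r+1))
      simp only [hm] at *
      linarith
    rw [← Finset.sum_mul] at this
    have h2 : m r ≤ w 0 * m r + ∑ d ∈ Finset.Icc 1 r, w d * (m (r+d) + m (r-d)) := by
      have h3 : m r = (w 0 + 2 * ∑ ℓ ∈ Finset.Icc 1 r, w ℓ) * m r := by rw [hsum, one_mul]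
      linarith
    by_contra hneg
    push Not at hneg
    have h4 := mul_le_mul_of_nonneg_left h2 (sub_nonneg.2 ht1.le)
    nlinarith
  have hcast0 : m 0 = B 0 0 := by simp [hm]
  have mr : m r = B 0 (r : Fin (2*r+1)) := by simp [hm]
  have Bd : ∀ i, B i i = m 0 := by intro i; rw [Bc, sub_self, hcast0]
  have m00 : 0 ≤ m 0 := mr0.trans (by rw [hcast0]; exact mlow 0)
  have pair : ∀ i j : Fin (2*r+1), i ≠ j → ∑ t, p0vec W (fun _ => θ) ω {i, j} t
      = 2 * ((1-θ)*ω / (1 - ω + ω * (m 0 + B 0 (j - i)))) / θ := by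
    intro i j hij
    have hp : 0 < 1 - ω + ω * (m 0 + B 0 (j - i)) := by
      have := mlow (j - i)
      have : 0 ≤ ω * (m 0 + B 0 (j - i)) := mul_nonneg ho0.le (by linarith)
      linarith
    have := rg_p0 W hW hrow hsym θ hθ ω hω B hMB {i, j} ((1-θ)*ω / (1 - ω + ω * (m 0 + B 0 (j - i)))) (by
      intro t ht
      have hs : ∑ u ∈ ({i, j} : Finset (Fin (2*r+1))), B t u = m 0 + B 0 (j - i) := by
        rw [Finset.sum_pair hij]
        simp only [Finset.mem_insert, Finset.mem_singleton] at ht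
        rcases ht with rfl | rfl
        · rw [Bd, Bc t j]
        · rw [Bd, Bsym t i, Bc i t, add_comm]
      rw [hs]
      field_simp)
    rw [this, Finset.card_pair hij]; norm_num
  have nz : ∀ k : ℕ, 1 ≤ k → k < 2*r+1 → (0 : Fin (2*r+1)) ≠ (k : Fin (2*r+1)) := by
    intro k h1 h2 h
    have := (Fin.natCast_eq_zero).1 h.symm
    exact absurd (Nat.le_of_dvd (by omega) this) (by omega)
  have best := pair 0 r (nz r hr (by omega))
  rw [sub_zero, ← mr] at best
  have a0 : 0 < (1-θ)*ω := mul_pos (by linarith) ho0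
  have hpr : 0 < 1 - ω + ω * (m 0 + m r) := by
    have : 0 ≤ ω * (m 0 + m r) := mul_nonneg ho0.le (by linarith)
    linarith
  refine ⟨hu, ?_, ?_, ?_, ?_⟩
  · ext i j; exact Bc i j
  · intro k hk
    simpa [hm] using mdec k hk
  · intro S hS
    have npos : (0:ℝ) < ((2*r+1 : ℕ) : ℝ) + 1 := by positivity
    rw [sp0, sp0]
    refine div_le_div_of_nonneg_right ?_ npos.le
    refine add_le_add_left ?_ 1
    rw [best]
    rcases Nat.lt_or_ge S.card 2 with h2 | h2
    · rcases Nat.lt_or_ge S.card 1 with h1' | h1'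
      · have : S = ∅ := Finset.card_eq_zero.1 (by omega)
        subst this
        rw [rg_p0 W hW hrow hsym θ hθ ω hω B hMB ∅ 0 (by simp)]
        simp only [mul_zero, zero_div]
        exact div_nonneg (mul_nonneg (by norm_num) (div_nonneg a0.le hpr.le)) ht0.le
      · obtain ⟨i, rfl⟩ := Finset.card_eq_one.1 (show S.card = 1 by omega)
        have hp : 0 < 1 - ω + ω * m 0 := by
          have := mul_nonneg ho0.le m00
          linarith
        rw [rg_p0 W hW hrow hsym θ hθ ω hω B hMB {i} ((1-θ)*ω / (1 - ω + ω * m 0)) (by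
          intro t ht
          rw [Finset.mem_singleton] at ht
          subst ht
          rw [Finset.sum_singleton, Bd]
          field_simp)]
        refine div_le_div_of_nonneg_right ?_ ht0.le
        rw [Finset.card_singleton, Nat.cast_one, one_mul, ← mul_div_assoc, div_le_div_iff₀ hp hpr]
        have h3 : m r ≤ m 0 := by rw [hcast0]; exact mlow 0
        have : ω * m r ≤ ω * m 0 := mul_le_mul_of_nonneg_left h3 ho0.le
        have : 1 - ω + ω * (m 0 + m r) ≤ 2 * (1 - ω + ω * m 0) := by linarith
        nlinarith [mul_le_mul_of_nonneg_left this a0.le]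
    · obtain ⟨i, j, hij, rfl⟩ := Finset.card_eq_two.1 (le_antisymm hS h2)
      rw [pair i j hij]
      refine div_le_div_of_nonneg_right ?_ ht0.le
      refine mul_le_mul_of_nonneg_left ?_ (by norm_num)
      refine div_le_div_of_nonneg_left a0.le hpr ?_
      have := mul_le_mul_of_nonneg_left (mlow (j - i)) ho0.le
      linarith
  · rw [sp0, sp0, best, pair 0 _ (nz (r+1) (by omega) (by omega)), sub_zero]
    have : B 0 ((r+1 : ℕ) : Fin (2*r+1)) = m r := by
      rw [← meven, ← mper]
      simp only [hm]
      congr 1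
      rw [show -(r:ℤ) + (2*r+1) = ((r+1 : ℕ) : ℤ) by push_cast; ring, Int.cast_natCast]
    rw [this]

/-- Odd ring graph: the generating entries of `M⁻¹` are strictly decreasing, and the
antipodal pair `{1, s}` is optimal for `K = 2` (with `{1, s+1}` equally good). -/
theorem ring_graph_odd_optimal
    (s n : ℕ) (hs : 2 ≤ s) (hn : n = 2 * s - 1)
    (w : ℕ → ℝ)
    (hmono : ∀ ℓ : ℕ, ℓ + 1 ≤ s - 1 → w (ℓ + 1) ≤ w ℓ)
    (hlast : 0 ≤ w (s - 1)) (h0 : 0 < w 0) (h1 : w (s - 1) < w 1)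
    (hsum : w 0 + 2 * ∑ ℓ ∈ Finset.Icc 1 (s - 1), w ℓ = 1)
    (θ : ℝ) (hθ : θ ∈ Set.Ioo (0 : ℝ) 1) (ω : ℝ) (hω : ω ∈ Set.Ioo (0 : ℝ) 1) :
    IsUnit (Mring n θ (ringGen n w)) ∧
    (Mring n θ (ringGen n w))⁻¹ =
      Cmat (fun k => (Mring n θ (ringGen n w))⁻¹ ⟨0, by omega⟩ k) ∧
    (∀ k : ℕ, ∀ hk : k + 1 ≤ s - 1,
      (Mring n θ (ringGen n w))⁻¹ ⟨0, by omega⟩ ⟨k + 1, by omega⟩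
        < (Mring n θ (ringGen n w))⁻¹ ⟨0, by omega⟩ ⟨k, by omega⟩) ∧
    (∀ S : Finset (Fin n), S.card ≤ 2 →
      sp0 (Cmat (ringGen n w)) (fun _ => θ) ω S
        ≤ sp0 (Cmat (ringGen n w)) (fun _ => θ) ω {⟨0, by omega⟩, ⟨s - 1, by omega⟩}) ∧
    sp0 (Cmat (ringGen n w)) (fun _ => θ) ω {⟨0, by omega⟩, ⟨s, by omega⟩}
      = sp0 (Cmat (ringGen n w)) (fun _ => θ) ω {⟨0, by omega⟩, ⟨s - 1, by omega⟩} := by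
  obtain ⟨r, rfl⟩ : ∃ r, s = r + 1 := ⟨s - 1, by omega⟩
  have hn' : n = 2*r+1 := by omega
  subst hn'
  simp only [Nat.add_sub_cancel] at hmono hlast h1 hsum
  obtain ⟨c1, c2, c3, c4, c5⟩ := rg_main r (by omega) w hmono hlast h1 hsum θ hθ ω hω
  open Fin.CommRing in
  have hc : ∀ k (hk : k < 2*r+1), (⟨k, hk⟩ : Fin (2*r+1)) = (k : Fin (2*r+1)) := by
    intro k hk; ext; simp [Nat.mod_eq_of_lt hk]
  have hz : ∀ hk : 0 < 2*r+1, (⟨0, hk⟩ : Fin (2*r+1)) = 0 := fun _ => rfl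
  simp only [Nat.add_sub_cancel, hz]
  refine ⟨c1, c2, ?_, ?_, ?_⟩
  · intro k hk
    rw [hc, hc]
    exact c3 k (by omega)
  · intro S hS
    rw [hc]; exact c4 S hS
  · rw [hc, hc]; exact c5
end

section
/- Let s ≥ 2 and n = 2s − 1. Let u₀, u₁, …, u_{s−1} and v₀, v₁, …, v_{s−1} be real numbers with u₀ ≥ u₁ ≥ … ≥ u_{s−1} ≥ 0 and v₀ ≥ v₁ ≥ … ≥ v_{s−1} ≥ 0. Define the symmetric circulant matrices U = C(u₀, u₁, …, u_{s−1}, u_{s−1}, …, u₁) and V = C(v₀, v₁, …, v_{s−1}, v_{s−1}, …, v₁). Then the product R = U V is a symmetric circulant matrix, R = C(r₀, r₁, …, r_{s−1}, r_{s−1}, …, r₁) for some real numbers r₀, …, r_{s−1}, and these satisfy r₀ ≥ r₁ ≥ … ≥ r_{s−1} ≥ 0. -/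
open Matrix Finset

theorem aux_val_sub {n : ℕ} [NeZero n] (a b : Fin n) :
    (a - b).val = if b.val ≤ a.val then a.val - b.val else n + a.val - b.val := by
  have ha := a.isLt
  have hb := b.isLt
  rw [Fin.val_sub]
  split_ifs with h
  · rw [show n - b.val + a.val = (a.val - b.val) + n by omega, Nat.add_mod_right]
    exact Nat.mod_eq_of_lt (by omega)
  · rw [show n - b.val + a.val = n + a.val - b.val by omega]
    exact Nat.mod_eq_of_lt (by omega)

theorem aux_val_neg {n : ℕ} [NeZero n] (a : Fin n) :
    (-a).val = if a.val = 0 then 0 else n - a.val := by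
  have ha := a.isLt
  have h := aux_val_sub 0 a
  rw [zero_sub] at h
  rw [h]
  have h0 : (0 : Fin n).val = 0 := Fin.val_zero n
  rw [h0]
  by_cases hz : a.val = 0
  · rw [if_pos (by omega), if_pos hz]; omega
  · rw [if_neg (by omega), if_neg hz]; omega

theorem aux_ringGen_neg {n : ℕ} [NeZero n] (w : ℕ → ℝ) (a : Fin n) :
    ringGen n w (-a) = ringGen n w a := by
  have ha := a.isLt
  unfold ringGen
  congr 1
  rw [aux_val_neg]
  split_ifs <;> omega

theorem aux_anti (s : ℕ) (u : ℕ → ℝ) (h : ∀ k : ℕ, k + 1 ≤ s - 1 → u (k + 1) ≤ u k)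
    (a b : ℕ) (hab : a ≤ b) (hb : b ≤ s - 1) : u b ≤ u a := by
  induction b, hab using Nat.le_induction with
  | base => exact le_rfl
  | succ m hm ih => exact (h m hb).trans (ih (by omega))

theorem aux_term (s n : ℕ) [NeZero n] (hs : 2 ≤ s) (hn : n = 2 * s - 1) (u v : ℕ → ℝ)
    (humono : ∀ k : ℕ, k + 1 ≤ s - 1 → u (k + 1) ≤ u k)
    (hvmono : ∀ k : ℕ, k + 1 ≤ s - 1 → v (k + 1) ≤ v k)
    (k o : Fin n) (ho : o.val = 1) (hk : k.val + 1 ≤ s - 1) (x : Fin n) :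
    0 ≤ (ringGen n v x - ringGen n v (x + o)) *
      (ringGen n u (k - x) - ringGen n u (k + o + x)) := by
  have hx := x.isLt
  have hU := aux_anti s u humono
  have hV := aux_anti s v hvmono
  have e1 : (x + o).val = if n ≤ x.val + 1 then x.val + 1 - n else x.val + 1 := by
    rw [Fin.val_add_eq_ite, ho]
  have e2 := aux_val_sub k x
  have e3 : (k + o).val = k.val + 1 := by
    rw [Fin.val_add_eq_ite, ho, if_neg (by omega)]
  have e4 : (k + o + x).val =
      if n ≤ k.val + 1 + x.val then k.val + 1 + x.val - n else k.val + 1 + x.val := by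
    rw [Fin.val_add_eq_ite, e3]
  unfold ringGen
  by_cases hc : x.val ≤ s - 1
  · by_cases hc2 : x.val = s - 1
    · have : min (x + o).val (n - (x + o).val) = min x.val (n - x.val) := by
        split_ifs at e1 <;> omega
      rw [this, sub_self, zero_mul]
    · apply mul_nonneg <;> rw [sub_nonneg]
      · apply hV <;> split_ifs at e1 <;> omega
      · apply hU <;> split_ifs at e2 e4 <;> omega
  · apply mul_nonneg_of_nonpos_of_nonpos <;> rw [sub_nonpos]
    · apply hV <;> split_ifs at e1 <;> omega
    · apply hU <;> split_ifs at e2 e4 <;> omega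

theorem aux_diff {n : ℕ} [NeZero n] (f g : Fin n → ℝ) (hg : ∀ x, g (-x) = g x)
    (k o : Fin n) :
    2 * ((∑ x, f x * g (k - x)) - ∑ x, f x * g (k + o - x)) =
      ∑ x, (g x - g (x + o)) * (f (k - x) - f (k + o + x)) := by
  have a1 : ∑ x, f x * g (k - x) = ∑ x, f (k - x) * g x := by
    rw [← Equiv.sum_comp (Equiv.subLeft k)]
    exact Finset.sum_congr rfl fun x _ => by simp
  have a2 : ∑ x, f x * g (k + o - x) = ∑ x, f (k - x) * g (x + o) := by
    rw [← Equiv.sum_comp (Equiv.subLeft k)]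
    refine Finset.sum_congr rfl fun x _ => ?_
    simp only [Equiv.subLeft_apply]
    rw [show k + o - (k - x) = x + o by abel]
  have a3 : ∑ x, f x * g (k - x) = ∑ x, f (k + o + x) * g (x + o) := by
    rw [← Equiv.sum_comp (Equiv.addLeft (k + o))]
    refine Finset.sum_congr rfl fun x _ => ?_
    simp only [Equiv.coe_addLeft]
    rw [show k - (k + o + x) = -(x + o) by abel, hg]
  have a4 : ∑ x, f x * g (k + o - x) = ∑ x, f (k + o + x) * g x := by
    rw [← Equiv.sum_comp (Equiv.addLeft (k + o))]
    refine Finset.sum_congr rfl fun x _ => ?_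
    simp only [Equiv.coe_addLeft]
    rw [show k + o - (k + o + x) = -x by abel, hg]
  have : ∑ x, (g x - g (x + o)) * (f (k - x) - f (k + o + x)) =
      ∑ x, f (k - x) * g x - ∑ x, f (k - x) * g (x + o)
      + ∑ x, f (k + o + x) * g (x + o) - ∑ x, f (k + o + x) * g x := by
    rw [← Finset.sum_sub_distrib, ← Finset.sum_add_distrib, ← Finset.sum_sub_distrib]
    exact Finset.sum_congr rfl fun x _ => by ring
  rw [this, ← a1, ← a2, ← a3, ← a4]
  ring

/-- Products of nonnegative monotone symmetric circulant matrices (odd size) are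
symmetric circulant with nonnegative monotone generating entries. -/
theorem circulant_product_monotone
    (s n : ℕ) (hs : 2 ≤ s) (hn : n = 2 * s - 1)
    (u v : ℕ → ℝ)
    (humono : ∀ k : ℕ, k + 1 ≤ s - 1 → u (k + 1) ≤ u k) (hu0 : 0 ≤ u (s - 1))
    (hvmono : ∀ k : ℕ, k + 1 ≤ s - 1 → v (k + 1) ≤ v k) (hv0 : 0 ≤ v (s - 1)) :
    ∃ r : ℕ → ℝ,
      Cmat (ringGen n u) * Cmat (ringGen n v) = Cmat (ringGen n r) ∧
      (∀ k : ℕ, k + 1 ≤ s - 1 → r (k + 1) ≤ r k) ∧ 0 ≤ r (s - 1) := by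
  haveI : NeZero n := ⟨by omega⟩
  set R : Fin n → ℝ := fun k => ∑ x, ringGen n u x * ringGen n v (k - x) with hR
  have hRneg : ∀ k, R (-k) = R k := by
    intro k
    simp only [hR]
    rw [← Equiv.sum_comp (Equiv.neg (Fin n))]
    refine Finset.sum_congr rfl fun x _ => ?_
    simp only [Equiv.neg_apply]
    rw [show -k - -x = -(k - x) by abel, aux_ringGen_neg, aux_ringGen_neg]
  refine ⟨fun k => R (Fin.ofNat n k), ?_, ?_, ?_⟩
  · ext i j
    rw [Matrix.mul_apply]
    have hl : ∑ l, Cmat (ringGen n u) i l * Cmat (ringGen n v) l j = R (j - i) := by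
      simp only [hR, Cmat, Matrix.of_apply]
      rw [← Equiv.sum_comp (Equiv.addRight i)]
      refine Finset.sum_congr rfl fun x _ => ?_
      simp only [Equiv.coe_addRight]
      rw [show x + i - i = x by abel, show j - (x + i) = j - i - x by abel]
    rw [hl]
    simp only [Cmat, Matrix.of_apply, ringGen]
    generalize j - i = k
    have hk := k.isLt
    rcases le_total k.val (n - k.val) with h | h
    · rw [min_eq_left h]
      congr 1
      exact Fin.ext (Nat.mod_eq_of_lt hk).symm
    · rw [min_eq_right h, ← hRneg]
      congr 1
  · intro k hk
    have ho : (Fin.ofNat n 1).val = 1 := Nat.mod_eq_of_lt (by omega)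
    have hkv : (Fin.ofNat n k).val = k := Nat.mod_eq_of_lt (by omega)
    have hk1 : Fin.ofNat n (k + 1) = Fin.ofNat n k + Fin.ofNat n 1 := by
      ext
      rw [Fin.val_add_eq_ite, ho, hkv, if_neg (by omega)]
      exact Nat.mod_eq_of_lt (by omega)
    have hd := aux_diff (ringGen n u) (ringGen n v) (aux_ringGen_neg v)
      (Fin.ofNat n k) (Fin.ofNat n 1)
    have hnn := Finset.sum_nonneg fun x (_ : x ∈ Finset.univ) =>
      aux_term s n hs hn u v humono hvmono (Fin.ofNat n k) (Fin.ofNat n 1) ho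
        (by rw [hkv]; exact hk) x
    rw [← hd] at hnn
    simp only [hR]
    rw [hk1]
    linarith
  · have hpos : ∀ w : ℕ → ℝ, (∀ k : ℕ, k + 1 ≤ s - 1 → w (k + 1) ≤ w k) → 0 ≤ w (s - 1) →
        ∀ x : Fin n, 0 ≤ ringGen n w x := by
      intro w hw h0 x
      have hx := x.isLt
      exact h0.trans (aux_anti s w hw _ _ (by omega) le_rfl)
    exact Finset.sum_nonneg fun x _ => mul_nonneg (hpos u humono hu0 _) (hpos v hvmono hv0 _)
end

section
/- Let s ≥ 2 and n = 2s − 1. Let u₀, u₁, …, u_{s−1} and v₀, v₁, …, v_{s−1} be real numbers with u₀ ≥ u₁ ≥ … ≥ u_{s−1} and v₀ ≥ v₁ ≥ … ≥ v_{s−1}, and suppose there are indices i, j ∈ {0, 1, …, s−2} with j ≤ i such that u_i > u_{i+1} and v_j > v_{j+1}. Define the symmetric circulant matrices U = C(u₀, u₁, …, u_{s−1}, u_{s−1}, …, u₁) and V = C(v₀, v₁, …, v_{s−1}, v_{s−1}, …, v₁), and write their product as R = U V = C(r₀, r₁, …, r_{s−1}, r_{s−1}, …, r₁). Then, setting h*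 = min{ i + j, 2s − 3 − i − j }, the generating entries of R satisfy the strict chain r_{i−j} > r_{i−j+1} > … > r_{h*} > r_{h*+1}. -/
open Matrix Finset

section Aux
open Fin.NatCast Fin.CommRing

theorem ax_cast_neg (p a b : ℕ) (hab : a + b = 2 * p + 1) :
    ((a : ℕ) : Fin (2 * p + 1)) = -((b : ℕ) : Fin (2 * p + 1)) := by
  rw [eq_neg_iff_add_eq_zero, ← Nat.cast_add, hab]
  exact Fin.natCast_self _

theorem ax_neg (p : ℕ) (w : ℕ → ℝ) (x : Fin (2 * p + 1)) :
    ringGen (2 * p + 1) w (-x) = ringGen (2 * p + 1) w x := by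
  unfold ringGen
  congr 1
  have hx := x.isLt
  rw [Fin.val_neg]
  split_ifs with h
  · subst h; simp
  · have : x.val ≠ 0 := fun h' => h (Fin.ext h')
    omega

theorem ax_val (p : ℕ) (w : ℕ → ℝ) (d : ℕ) (hd : d ≤ p) :
    ringGen (2 * p + 1) w (d : Fin (2 * p + 1)) = w d := by
  unfold ringGen
  congr 1
  rw [Fin.val_natCast, Nat.mod_eq_of_lt (by omega)]
  omega

theorem ax_split (p : ℕ) (f : Fin (2 * p + 1) → ℝ) :
    ∑ t, f t = f 0 + ∑ k ∈ range p,
      (f ((k + 1 : ℕ) : Fin (2 * p + 1)) + f (-((k + 1 : ℕ) : Fin (2 * p + 1)))) := by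
  have h1 : ∑ t, f t = ∑ k ∈ range (2 * p + 1), f ((k : ℕ) : Fin (2 * p + 1)) := by
    rw [← Fin.sum_univ_eq_sum_range (fun k => f ((k : ℕ) : Fin (2 * p + 1)))]
    apply Finset.sum_congr rfl
    intro x _
    rw [Fin.cast_val_eq_self]
  have h0 : range (2 * p) = range (p + p) := by rw [two_mul]
  rw [h1, Finset.sum_range_succ', h0, Finset.sum_range_add, Finset.sum_add_distrib,
    add_comm]
  rw [← Finset.sum_range_reflect (fun k => f ((p + k + 1 : ℕ) : Fin (2 * p + 1)))]
  have h2 : ∑ k ∈ range p, f ((p + (p - 1 - k) + 1 : ℕ) : Fin (2 * p + 1))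
      = ∑ k ∈ range p, f (-((k + 1 : ℕ) : Fin (2 * p + 1))) := by
    apply Finset.sum_congr rfl
    intro k hk
    rw [Finset.mem_range] at hk
    congr 1
    rw [eq_neg_iff_add_eq_zero, ← Nat.cast_add,
      show p + (p - 1 - k) + 1 + (k + 1) = 2 * p + 1 by omega]
    exact Fin.natCast_self _
  rw [h2]
  simp

theorem ax_abel (p : ℕ) (v D : ℕ → ℝ) :
    v 0 * D 0 + ∑ k ∈ range p, v (k + 1) * (D (k + 1) - D k)
      = ∑ k ∈ range p, (v k - v (k + 1)) * D k + v p * D p := by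
  induction p with
  | zero => simp
  | succ q ih => rw [Finset.sum_range_succ, Finset.sum_range_succ, ← add_assoc, ih]; ring

theorem ax_conv (p : ℕ) (U : Fin (2 * p + 1) → ℝ) (v : ℕ → ℝ) (x : Fin (2 * p + 1)) :
    ∑ t, U t * ringGen (2 * p + 1) v (x - t)
      = v 0 * U x + ∑ k ∈ range p, v (k + 1) *
        (U (x - ((k + 1 : ℕ) : Fin (2 * p + 1))) + U (x + ((k + 1 : ℕ) : Fin (2 * p + 1)))) := by
  rw [← Equiv.sum_comp (Equiv.subLeft x)]
  simp only [Equiv.subLeft_apply, sub_sub_cancel]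
  rw [ax_split]
  congr 1
  · have := ax_val p v 0 (Nat.zero_le _)
    rw [Nat.cast_zero] at this
    rw [this, sub_zero, mul_comm]
  · apply Finset.sum_congr rfl
    intro k hk
    rw [Finset.mem_range] at hk
    rw [ax_neg, ax_val p v _ (by omega), sub_neg_eq_add]
    ring

theorem ax_diff (p : ℕ) (U : Fin (2 * p + 1) → ℝ) (v : ℕ → ℝ) (h : ℕ) :
    ∑ t, U t * ringGen (2 * p + 1) v ((h : Fin (2 * p + 1)) - t)
      - ∑ t, U t * ringGen (2 * p + 1) v (((h + 1 : ℕ) : Fin (2 * p + 1)) - t)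
      = ∑ k ∈ range p, (v k - v (k + 1)) *
        (U ((h : Fin (2 * p + 1)) - (k : Fin (2 * p + 1))) -
          U ((h + k + 1 : ℕ) : Fin (2 * p + 1))) := by
  have key := ax_abel p v (fun k => U ((h : Fin (2 * p + 1)) - (k : Fin (2 * p + 1))) -
          U ((h + k + 1 : ℕ) : Fin (2 * p + 1)))
  have hz : U ((h : Fin (2 * p + 1)) - (p : Fin (2 * p + 1))) -
          U ((h + p + 1 : ℕ) : Fin (2 * p + 1)) = 0 := by
    rw [sub_eq_zero]
    congr 1
    rw [add_assoc, Nat.cast_add, ax_cast_neg p (p + 1) p (by omega), sub_eq_add_neg]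
  simp only [hz, mul_zero, add_zero] at key
  rw [← key, ax_conv, ax_conv, add_sub_add_comm, ← Finset.sum_sub_distrib]
  congr 1
  · simp; ring
  · apply Finset.sum_congr rfl
    intro k _
    have e1 : ((h + 1 : ℕ) : Fin (2 * p + 1)) - ((k + 1 : ℕ) : Fin (2 * p + 1))
      = (h : Fin (2 * p + 1)) - (k : Fin (2 * p + 1)) := by push_cast; abel
    have e2 : ((h + 1 : ℕ) : Fin (2 * p + 1)) + ((k + 1 : ℕ) : Fin (2 * p + 1))
      = ((h + (k + 1) + 1 : ℕ) : Fin (2 * p + 1)) := by push_cast; abel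
    have e3 : (h : Fin (2 * p + 1)) + ((k + 1 : ℕ) : Fin (2 * p + 1))
      = ((h + k + 1 : ℕ) : Fin (2 * p + 1)) := by push_cast; abel
    rw [e1, e2, e3]; ring

theorem ax_near (p : ℕ) (u : ℕ → ℝ) (h k : ℕ) (hh : h ≤ p) (hk : k ≤ p) :
    ringGen (2 * p + 1) u ((h : Fin (2 * p + 1)) - (k : Fin (2 * p + 1)))
      = u (max h k - min h k) := by
  rcases le_total k h with hkh | hkh
  · obtain ⟨d, rfl⟩ := Nat.exists_eq_add_of_le hkh
    rw [Nat.cast_add, add_sub_cancel_left, ax_val p u d (by omega)]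
    congr 1; omega
  · obtain ⟨d, rfl⟩ := Nat.exists_eq_add_of_le hkh
    rw [← ax_neg, neg_sub, Nat.cast_add, add_sub_cancel_left, ax_val p u d (by omega)]
    congr 1; omega

theorem ax_far (p : ℕ) (u : ℕ → ℝ) (a : ℕ) (ha : a ≤ 2 * p) :
    ringGen (2 * p + 1) u (a : Fin (2 * p + 1)) = u (min a (2 * p + 1 - a)) := by
  unfold ringGen
  rw [Fin.val_natCast, Nat.mod_eq_of_lt (by omega)]

theorem ax_anti (p : ℕ) (u : ℕ → ℝ) (hu : ∀ k : ℕ, k + 1 ≤ p → u (k + 1) ≤ u k)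
    (a b : ℕ) (hab : a ≤ b) (hb : b ≤ p) : u b ≤ u a := by
  induction b, hab using Nat.le_induction with
  | base => exact le_rfl
  | succ m _ ih => exact (hu m hb).trans (ih (by omega))

end Aux

/-- Strict monotone chain in the generating entries of a product of monotone symmetric
circulant matrices (odd size). -/
theorem circulant_product_strict_chain
    (s n : ℕ) (hs : 2 ≤ s) (hn : n = 2 * s - 1)
    (u v : ℕ → ℝ)
    (humono : ∀ k : ℕ, k + 1 ≤ s - 1 → u (k + 1) ≤ u k)
    (hvmono : ∀ k : ℕ, k + 1 ≤ s - 1 → v (k + 1) ≤ v k)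
    (i j : ℕ) (hji : j ≤ i) (hi : i ≤ s - 2) (hj : j ≤ s - 2)
    (hui : u (i + 1) < u i) (hvj : v (j + 1) < v j) :
    ∃ r : ℕ → ℝ,
      Cmat (ringGen n u) * Cmat (ringGen n v) = Cmat (ringGen n r) ∧
      ∀ h : ℕ, i - j ≤ h → h ≤ min (i + j) (2 * s - 3 - i - j) → r (h + 1) < r h := by
  open Fin.NatCast Fin.CommRing in
  obtain ⟨p, rfl⟩ : ∃ p, s = p + 1 := ⟨s - 1, by omega⟩
  obtain rfl : n = 2 * p + 1 := by omega
  simp only [Nat.add_sub_cancel] at humono hvmono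
  refine ⟨fun h => ∑ t, ringGen (2 * p + 1) u t *
    ringGen (2 * p + 1) v ((h : Fin (2 * p + 1)) - t), ?_, ?_⟩
  · ext a b
    simp only [Cmat, Matrix.mul_apply, Matrix.of_apply]
    have hR : ∀ x : Fin (2 * p + 1), ringGen (2 * p + 1) (fun h => ∑ t, ringGen (2 * p + 1) u t *
        ringGen (2 * p + 1) v ((h : Fin (2 * p + 1)) - t)) x
        = ∑ t, ringGen (2 * p + 1) u t * ringGen (2 * p + 1) v (x - t) := by
      intro x
      have hx := x.isLt
      conv_lhs => unfold ringGen
      change ∑ t, ringGen (2 * p + 1) u t * ringGen (2 * p + 1) v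
        (((min x.val (2 * p + 1 - x.val) : ℕ) : Fin (2 * p + 1)) - t) = _
      rcases le_total x.val (2 * p + 1 - x.val) with h | h
      · rw [min_eq_left h, Fin.cast_val_eq_self]
      · rw [min_eq_right h, ax_cast_neg p _ x.val (by omega), Fin.cast_val_eq_self,
          ← Equiv.sum_comp (Equiv.neg _)]
        apply Finset.sum_congr rfl
        intro t _
        rw [Equiv.neg_apply, ax_neg, ← ax_neg p v (x - t)]
        congr 2
        abel
    rw [hR, ← Equiv.sum_comp (Equiv.addRight a)]
    apply Finset.sum_congr rfl
    intro t _
    simp only [Equiv.coe_addRight]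
    rw [add_sub_cancel_right, sub_sub, add_comm a t]
  · intro h h1 h2
    rw [← sub_pos]
    change 0 < ∑ t, _ - ∑ t, _
    rw [ax_diff]
    have hhi : h ≤ i + j := h2.trans (min_le_left _ _)
    have hhs : h ≤ 2 * (p + 1) - 3 - i - j := h2.trans (min_le_right _ _)
    clear h2
    apply Finset.sum_pos'
    · intro k hk
      rw [Finset.mem_range] at hk
      apply mul_nonneg
      · exact sub_nonneg.2 (hvmono k (by omega))
      · rw [ax_near p u h k (by omega) (by omega), ax_far p u _ (by omega), sub_nonneg]
        apply ax_anti p u humono <;> omega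
    · refine ⟨j, Finset.mem_range.2 (by omega), mul_pos (sub_pos.2 hvj) ?_⟩
      rw [ax_near p u h j (by omega) (by omega), ax_far p u _ (by omega), sub_pos]
      calc _ ≤ u (i + 1) := by apply ax_anti p u humono <;> omega
        _ < u i := hui
        _ ≤ _ := by apply ax_anti p u humono <;> omega
end
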